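/- arXiv:2009.01946 — 10 statements merged into one kernel-verified Lean document; each statement's English description precedes it below -/
import Mathlib

section
/- Let A, B, C be a nondegenerate acute triangle in the Euclidean plane with side lengths a = dist B C, b = dist C A, c = dist A B (so b²+c²−a², c²+a²−b², a²+b²−c² are all positive). Let H₁, H₂, H₃ be the feet of the altitudes (H₁ the orthogonal projection of A onto line BC, H₂ of B onto line CA, H₃ of C onto line AB), let H be the orthocenter, O the circumcenter, E = midpoint(O, H) the nine-point center, Sy the symmedian point of ABC, G_h the centroid of H₁H₂H₃, Sy_h the symmedian point of the orthic triangle H₁H₂H₃, and GOT the barycentric combination of A, B, C with weights (a²/(b²+c²−a²), b²/(c²+a²−b²), c²/(a²+b²−c²)). Then there exists a nonzero real polynomial in two variables of total degree at most 3 vanishing at all fifteen points: A, B, C, H₁, H₂, H₃, the three midpoints of the segments H₂H₃, H₃H₁, H₁H₂, H, E, G_h, Sy, Sy_h, and GOT. -/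
open EuclideanGeometry RealInnerProductSpace

/-- The barycentric combination of three points with weights `u, v, w`. -/
noncomputable def bary (P Q R : EuclideanSpace ℝ (Fin 2)) (u v w : ℝ) :
    EuclideanSpace ℝ (Fin 2) :=
  (u / (u + v + w)) • P + (v / (u + v + w)) • Q + (w / (u + v + w)) • R

/-- Evaluation of a two-variable real polynomial at a point of the plane. -/
noncomputable def mvEval (f : MvPolynomial (Fin 2) ℝ)
    (p : EuclideanSpace ℝ (Fin 2)) : ℝ :=
  MvPolynomial.eval (fun i => p i) f

abbrev PP := EuclideanSpace ℝ (Fin 2)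

/-- The cubic as a form. -/
def FF (x y z X Y Z : ℝ) : ℝ :=
  (y + z) * (y * z + (x * y + y * z + z * x)) * (Y * Z * (y * Y - z * Z)) +
  (z + x) * (z * x + (x * y + y * z + z * x)) * (Z * X * (z * Z - x * X)) +
  (x + y) * (x * y + (x * y + y * z + z * x)) * (X * Y * (x * X - y * Y))

lemma FF_smul (x y z k X Y Z : ℝ) (h : FF x y z X Y Z = 0) :
    FF x y z (k * X) (k * Y) (k * Z) = 0 := by
  have : FF x y z (k * X) (k * Y) (k * Z) = k ^ 3 * FF x y z X Y Z := by
    unfold FF; ring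
  rw [this, h, mul_zero]

/-- linear form det (B - p, C - p) -/
noncomputable def lin (B C : PP) : MvPolynomial (Fin 2) ℝ :=
  MvPolynomial.C (B 0 * C 1 - B 1 * C 0) +
  (MvPolynomial.C (B 1 - C 1) * MvPolynomial.X 0 + MvPolynomial.C (C 0 - B 0) * MvPolynomial.X 1)

lemma lin_deg (B C : PP) : (lin B C).totalDegree ≤ 1 := by
  unfold lin
  have h (r : ℝ) (i : Fin 2) :
      (MvPolynomial.C r * MvPolynomial.X i : MvPolynomial (Fin 2) ℝ).totalDegree ≤ 1 := by
    refine (MvPolynomial.totalDegree_mul _ _).trans ?_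
    simp [MvPolynomial.totalDegree_C, MvPolynomial.totalDegree_X]
  refine (MvPolynomial.totalDegree_add _ _).trans (max_le ?_ ?_)
  · rw [MvPolynomial.totalDegree_C]; exact Nat.zero_le _
  · exact (MvPolynomial.totalDegree_add _ _).trans (max_le (h _ _) (h _ _))

lemma cub_deg (k r s : ℝ) (f g : MvPolynomial (Fin 2) ℝ) (hf : f.totalDegree ≤ 1)
    (hg : g.totalDegree ≤ 1) :
    (MvPolynomial.C k * (f * g * (MvPolynomial.C r * f - MvPolynomial.C s * g))).totalDegree
      ≤ 3 := by
  have h (r : ℝ) (f : MvPolynomial (Fin 2) ℝ) :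
      (MvPolynomial.C r * f).totalDegree ≤ f.totalDegree := by
    refine (MvPolynomial.totalDegree_mul _ _).trans ?_
    simp [MvPolynomial.totalDegree_C]
  have h1 := MvPolynomial.totalDegree_sub (MvPolynomial.C r * f) (MvPolynomial.C s * g)
  have h2 := max_le ((h r f).trans hf) ((h s g).trans hg)
  have h3 := MvPolynomial.totalDegree_mul f g
  have h4 := MvPolynomial.totalDegree_mul (f * g) (MvPolynomial.C r * f - MvPolynomial.C s * g)
  have h5 := h k (f * g * (MvPolynomial.C r * f - MvPolynomial.C s * g))
  omega

noncomputable def cub (A B C : PP) (x y z : ℝ) : MvPolynomial (Fin 2) ℝ :=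
  MvPolynomial.C ((y + z) * (y * z + (x * y + y * z + z * x))) *
    (lin C A * lin A B * (MvPolynomial.C y * lin C A - MvPolynomial.C z * lin A B)) +
  MvPolynomial.C ((z + x) * (z * x + (x * y + y * z + z * x))) *
    (lin A B * lin B C * (MvPolynomial.C z * lin A B - MvPolynomial.C x * lin B C)) +
  MvPolynomial.C ((x + y) * (x * y + (x * y + y * z + z * x))) *
    (lin B C * lin C A * (MvPolynomial.C x * lin B C - MvPolynomial.C y * lin C A))

lemma cub_total (A B C : PP) (x y z : ℝ) : (cub A B C x y z).totalDegree ≤ 3 := by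
  unfold cub
  refine (MvPolynomial.totalDegree_add _ _).trans (max_le
    ((MvPolynomial.totalDegree_add _ _).trans (max_le ?_ ?_)) ?_) <;>
  exact cub_deg _ _ _ _ _ (lin_deg _ _) (lin_deg _ _)

noncomputable def DD (A B C : PP) : ℝ := (B 0 - A 0) * (C 1 - A 1) - (B 1 - A 1) * (C 0 - A 0)

lemma lin_eval (B C p : PP) : MvPolynomial.eval (fun i => p i) (lin B C) =
    B 0 * C 1 - B 1 * C 0 + (B 1 - C 1) * p 0 + (C 0 - B 0) * p 1 := by
  simp [lin]; ring

lemma cub_eval (A B C : PP) (x y z u v w : ℝ) (h : u + v + w = 1) :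
    mvEval (cub A B C x y z) (u • A + v • B + w • C) = DD A B C ^ 3 * FF x y z u v w := by
  obtain rfl : w = 1 - u - v := by linarith
  set p : PP := u • A + v • B + (1 - u - v) • C with hp
  have h0 : p 0 = u * A 0 + v * B 0 + (1 - u - v) * C 0 := by simp [hp]
  have h1 : p 1 = u * A 1 + v * B 1 + (1 - u - v) * C 1 := by simp [hp]
  have e1 : MvPolynomial.eval (fun i => p i) (lin B C) = DD A B C * u := by
    rw [lin_eval, h0, h1, DD]; ring
  have e2 : MvPolynomial.eval (fun i => p i) (lin C A) = DD A B C * v := by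
    rw [lin_eval, h0, h1, DD]; ring
  have e3 : MvPolynomial.eval (fun i => p i) (lin A B) = DD A B C * (1 - u - v) := by
    rw [lin_eval, h0, h1, DD]; ring
  simp only [mvEval, cub, map_add, map_mul, map_sub, MvPolynomial.eval_C, e1, e2, e3, FF]
  ring

lemma cub_zero (A B C : PP) (x y z u v w : ℝ) (p : PP) (hs : u + v + w ≠ 0)
    (hp : p = (u / (u + v + w)) • A + (v / (u + v + w)) • B + (w / (u + v + w)) • C)
    (h : FF x y z u v w = 0) :
    mvEval (cub A B C x y z) p = 0 := by
  rw [hp, cub_eval]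
  · have := FF_smul x y z (u + v + w)⁻¹ u v w h
    simp only [div_eq_inv_mul]
    rw [this, mul_zero]
  · field_simp

lemma dist_sq (P Q : PP) : dist P Q ^ 2 = (P 0 - Q 0) ^ 2 + (P 1 - Q 1) ^ 2 := by
  rw [EuclideanSpace.dist_eq, Real.sq_sqrt (by positivity)]
  simp [Fin.sum_univ_two, Real.dist_eq, sq_abs]

lemma inner_coord (P Q : PP) : (inner ℝ P Q : ℝ) = P 0 * Q 0 + P 1 * Q 1 := by
  simp [PiLp.inner_apply, Fin.sum_univ_two]; ring

lemma foot (A B C H : PP) (y z : ℝ) (hy : 2 * y = dist B C ^ 2 + dist A B ^ 2 - dist C A ^ 2)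
    (hz : 2 * z = dist B C ^ 2 + dist C A ^ 2 - dist A B ^ 2) (hyz : y + z ≠ 0)
    (hH : H ∈ affineSpan ℝ ({B, C} : Set PP) ∧ (inner ℝ (A - H) (C - B) : ℝ) = 0) :
    H = (z / (y + z)) • B + (y / (y + z)) • C := by
  obtain ⟨hm, hi⟩ := hH
  obtain ⟨t, rfl⟩ := mem_affineSpan_pair_iff_exists_lineMap_eq.1 hm
  simp only [dist_sq] at hy hz
  rw [inner_coord] at hi
  simp [AffineMap.lineMap_apply] at hi
  have ht : t = y / (y + z) := by
    rw [eq_div_iff hyz]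
    linear_combination -hi + (t - 1) / 2 * hy + t / 2 * hz
  have ht' : z / (y + z) = 1 - t := by rw [ht]; field_simp; ring
  rw [ht', ← ht]
  simp only [AffineMap.lineMap_apply, vsub_eq_sub, vadd_eq_add]
  module

lemma dist_bary (A B C : PP) (x y z : ℝ)
    (hx : 2 * x = dist C A ^ 2 + dist A B ^ 2 - dist B C ^ 2)
    (hy : 2 * y = dist A B ^ 2 + dist B C ^ 2 - dist C A ^ 2)
    (hz : 2 * z = dist B C ^ 2 + dist C A ^ 2 - dist A B ^ 2)
    (P Q : PP) (u v w u' v' w' : ℝ) (h : u + v + w = 1) (h' : u' + v' + w' = 1)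
    (hP : P = u • A + v • B + w • C) (hQ : Q = u' • A + v' • B + w' • C) :
    dist P Q ^ 2 = x * (u - u') ^ 2 + y * (v - v') ^ 2 + z * (w - w') ^ 2 := by
  obtain rfl : w = 1 - u - v := by linarith
  obtain rfl : w' = 1 - u' - v' := by linarith
  simp only [dist_sq] at *
  rw [hP, hQ]
  simp
  linear_combination -(u - u') ^ 2 / 2 * hx - (v - v') ^ 2 / 2 * hy - (u - u' + v - v') ^ 2 / 2 * hz

lemma circum (A B C O : PP) (x y z : ℝ)
    (hx : 2 * x = dist C A ^ 2 + dist A B ^ 2 - dist B C ^ 2)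
    (hy : 2 * y = dist A B ^ 2 + dist B C ^ 2 - dist C A ^ 2)
    (hz : 2 * z = dist B C ^ 2 + dist C A ^ 2 - dist A B ^ 2)
    (hT : 0 < x * y + y * z + z * x)
    (hO : dist O A = dist O B ∧ dist O A = dist O C) :
    O = (x * (y + z) / (2 * (x * y + y * z + z * x))) • A +
      (y * (z + x) / (2 * (x * y + y * z + z * x))) • B +
      (z * (x + y) / (2 * (x * y + y * z + z * x))) • C := by
  have h1 : dist O A ^ 2 = dist O B ^ 2 := by rw [hO.1]
  have h2 : dist O A ^ 2 = dist O C ^ 2 := by rw [hO.2]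
  simp only [dist_sq] at *
  have hx' : x = (B 0 - A 0) * (C 0 - A 0) + (B 1 - A 1) * (C 1 - A 1) := by linarith
  have hy' : y = (C 0 - B 0) * (A 0 - B 0) + (C 1 - B 1) * (A 1 - B 1) := by linarith
  have hz' : z = (A 0 - C 0) * (B 0 - C 0) + (A 1 - C 1) * (B 1 - C 1) := by linarith
  have hTn := hT.ne'
  clear hO hx hy hz hT
  ext i
  fin_cases i
  · simp
    have e : x * (y + z) / (2 * (x * y + y * z + z * x)) * A 0 +
      y * (z + x) / (2 * (x * y + y * z + z * x)) * B 0 +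
      z * (x + y) / (2 * (x * y + y * z + z * x)) * C 0 =
      (x * (y + z) * A 0 + y * (z + x) * B 0 + z * (x + y) * C 0) /
        (2 * (x * y + y * z + z * x)) := by ring
    rw [e, eq_div_iff (by simpa using hTn)]
    clear e hTn
    subst hx' hy' hz'
    linear_combination (((B 0 - A 0) * (C 1 - A 1) - (B 1 - A 1) * (C 0 - A 0)) * (C 1 - A 1)) * h1 - (((B 0 - A 0) * (C 1 - A 1) - (B 1 - A 1) * (C 0 - A 0)) * (B 1 - A 1)) * h2
  · simp
    have e : x * (y + z) / (2 * (x * y + y * z + z * x)) * A 1 +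
      y * (z + x) / (2 * (x * y + y * z + z * x)) * B 1 +
      z * (x + y) / (2 * (x * y + y * z + z * x)) * C 1 =
      (x * (y + z) * A 1 + y * (z + x) * B 1 + z * (x + y) * C 1) /
        (2 * (x * y + y * z + z * x)) := by ring
    rw [e, eq_div_iff (by simpa using hTn)]
    clear e hTn
    subst hx' hy' hz'
    linear_combination -(((B 0 - A 0) * (C 1 - A 1) - (B 1 - A 1) * (C 0 - A 0)) * (C 0 - A 0)) * h1 + (((B 0 - A 0) * (C 1 - A 1) - (B 1 - A 1) * (C 0 - A 0)) * (B 0 - A 0)) * h2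

lemma DD_sq (A B C : PP) (x y z : ℝ)
    (hx : 2 * x = dist C A ^ 2 + dist A B ^ 2 - dist B C ^ 2)
    (hy : 2 * y = dist A B ^ 2 + dist B C ^ 2 - dist C A ^ 2)
    (hz : 2 * z = dist B C ^ 2 + dist C A ^ 2 - dist A B ^ 2) :
    DD A B C ^ 2 = x * y + y * z + z * x := by
  simp only [dist_sq] at *
  have hx' : x = (B 0 - A 0) * (C 0 - A 0) + (B 1 - A 1) * (C 1 - A 1) := by linarith
  have hy' : y = (C 0 - B 0) * (A 0 - B 0) + (C 1 - B 1) * (A 1 - B 1) := by linarith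
  have hz' : z = (A 0 - C 0) * (B 0 - C 0) + (A 1 - C 1) * (B 1 - C 1) := by linarith
  rw [hx', hy', hz', DD]; ring

theorem stmt1 (A B C O : EuclideanSpace ℝ (Fin 2))
    (hABC : AffineIndependent ℝ ![A, B, C])
    (a b c : ℝ) (ha : a = dist B C) (hb : b = dist C A) (hc : c = dist A B)
    (hacute : 0 < b ^ 2 + c ^ 2 - a ^ 2 ∧ 0 < c ^ 2 + a ^ 2 - b ^ 2 ∧
      0 < a ^ 2 + b ^ 2 - c ^ 2)
    (H₁ H₂ H₃ H E Sy Gh Syh GOT : EuclideanSpace ℝ (Fin 2))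
    (hH₁ : H₁ ∈ affineSpan ℝ ({B, C} : Set (EuclideanSpace ℝ (Fin 2))) ∧
      ⟪A - H₁, C - B⟫ = 0)
    (hH₂ : H₂ ∈ affineSpan ℝ ({C, A} : Set (EuclideanSpace ℝ (Fin 2))) ∧
      ⟪B - H₂, A - C⟫ = 0)
    (hH₃ : H₃ ∈ affineSpan ℝ ({A, B} : Set (EuclideanSpace ℝ (Fin 2))) ∧
      ⟪C - H₃, B - A⟫ = 0)
    (hO : dist O A = dist O B ∧ dist O A = dist O C)
    (hH : H = A + B + C - (2 : ℝ) • O)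
    (hE : E = midpoint ℝ O H)
    (hSy : Sy = bary A B C (a ^ 2) (b ^ 2) (c ^ 2))
    (hGh : Gh = bary H₁ H₂ H₃ 1 1 1)
    (hSyh : Syh = bary H₁ H₂ H₃ (dist H₂ H₃ ^ 2) (dist H₃ H₁ ^ 2) (dist H₁ H₂ ^ 2))
    (hGOT : GOT = bary A B C (a ^ 2 / (b ^ 2 + c ^ 2 - a ^ 2))
      (b ^ 2 / (c ^ 2 + a ^ 2 - b ^ 2)) (c ^ 2 / (a ^ 2 + b ^ 2 - c ^ 2))) :
    ∃ f : MvPolynomial (Fin 2) ℝ, f ≠ 0 ∧ f.totalDegree ≤ 3 ∧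
      mvEval f A = 0 ∧ mvEval f B = 0 ∧ mvEval f C = 0 ∧
      mvEval f H₁ = 0 ∧ mvEval f H₂ = 0 ∧ mvEval f H₃ = 0 ∧
      mvEval f (midpoint ℝ H₂ H₃) = 0 ∧ mvEval f (midpoint ℝ H₃ H₁) = 0 ∧
      mvEval f (midpoint ℝ H₁ H₂) = 0 ∧
      mvEval f H = 0 ∧ mvEval f E = 0 ∧ mvEval f Gh = 0 ∧
      mvEval f Sy = 0 ∧ mvEval f Syh = 0 ∧ mvEval f GOT = 0 := by
  obtain ⟨p1, p2, p3⟩ := hacute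
  obtain ⟨x, hx⟩ : ∃ x, 2 * x = b ^ 2 + c ^ 2 - a ^ 2 := ⟨_, mul_div_cancel₀ _ two_ne_zero⟩
  obtain ⟨y, hy⟩ : ∃ y, 2 * y = c ^ 2 + a ^ 2 - b ^ 2 := ⟨_, mul_div_cancel₀ _ two_ne_zero⟩
  obtain ⟨z, hz⟩ : ∃ z, 2 * z = a ^ 2 + b ^ 2 - c ^ 2 := ⟨_, mul_div_cancel₀ _ two_ne_zero⟩
  have x0 : 0 < x := by linarith
  have y0 : 0 < y := by linarith
  have z0 : 0 < z := by linarith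
  have a2 : a ^ 2 = y + z := by linarith
  have b2 : b ^ 2 = z + x := by linarith
  have c2 : c ^ 2 = x + y := by linarith
  have T0 : 0 < x * y + y * z + z * x := by positivity
  rw [a2, b2, c2] at hGOT hSy
  rw [ha, hb, hc] at hx hy hz
  have e1 := foot A B C H₁ y z (by linarith) (by linarith) (by positivity) hH₁
  have e2 := foot B C A H₂ z x (by linarith) (by linarith) (by positivity) hH₂
  have e3 := foot C A B H₃ x y (by linarith) (by linarith) (by positivity) hH₃
  have eO := circum A B C O x y z hx hy hz T0 hO
  have hD := DD_sq A B C x y z hx hy hz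
  have hD0 : DD A B C ≠ 0 := by
    intro h; rw [h] at hD; norm_num at hD; linarith
  have f1 : H₁ = (0 : ℝ) • A + (z / (y + z)) • B + (y / (y + z)) • C := by rw [e1]; module
  have f2 : H₂ = (z / (z + x)) • A + (0 : ℝ) • B + (x / (z + x)) • C := by rw [e2]; module
  have f3 : H₃ = (y / (x + y)) • A + (x / (x + y)) • B + (0 : ℝ) • C := by rw [e3]; module
  have s1 : (0 : ℝ) + (z / (y + z)) + (y / (y + z)) = 1 := by field_simp; ring
  have s2 : (z / (z + x)) + (0 : ℝ) + (x / (z + x)) = 1 := by field_simp; ring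
  have s3 : (y / (x + y)) + (x / (x + y)) + (0 : ℝ) = 1 := by field_simp; ring
  have d1 := dist_bary A B C x y z hx hy hz H₂ H₃ _ _ _ _ _ _ s2 s3 f2 f3
  have d2 := dist_bary A B C x y z hx hy hz H₃ H₁ _ _ _ _ _ _ s3 s1 f3 f1
  have d3 := dist_bary A B C x y z hx hy hz H₁ H₂ _ _ _ _ _ _ s1 s2 f1 f2
  have d1' : dist H₂ H₃ ^ 2 = x ^ 2 * (y + z) / ((z + x) * (x + y)) := by
    rw [d1]; field_simp; ring
  have d2' : dist H₃ H₁ ^ 2 = y ^ 2 * (z + x) / ((x + y) * (y + z)) := by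
    rw [d2]; field_simp; ring
  have d3' : dist H₁ H₂ ^ 2 = z ^ 2 * (x + y) / ((y + z) * (z + x)) := by
    rw [d3]; field_simp; ring
  rw [d1', d2', d3'] at hSyh
  clear d1 d2 d3 d1' d2' d3' hO hx hy hz p1 p2 p3 e1 e2 e3 s1 s2 s3 hH₁ hH₂ hH₃
  refine ⟨cub A B C x y z, ?_, cub_total _ _ _ _ _ _, ?_, ?_, ?_, ?_, ?_, ?_, ?_, ?_, ?_, ?_, ?_, ?_,
    ?_, ?_, ?_⟩
  · intro h
    have := cub_eval A B C x y z 0 2 (-1) (by norm_num)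
    rw [h] at this
    simp only [mvEval, map_zero] at this
    have h2 : FF x y z 0 2 (-1) =
      -((y + z) * (y * z + (x * y + y * z + z * x)) * (2 * (2 * y + z))) := by unfold FF; ring
    rw [h2] at this
    have h3 : 0 < (y + z) * (y * z + (x * y + y * z + z * x)) * (2 * (2 * y + z)) := by positivity
    have h4 := pow_ne_zero 3 hD0
    rcases mul_eq_zero.1 this.symm with h | h
    · exact h4 h
    · linarith
  · exact cub_zero A B C x y z 1 0 0 _ (by norm_num) (by simp) (by unfold FF; ring)
  · exact cub_zero A B C x y z 0 1 0 _ (by norm_num) (by simp) (by unfold FF; ring)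
  · exact cub_zero A B C x y z 0 0 1 _ (by norm_num) (by simp) (by unfold FF; ring)
  · exact cub_zero A B C x y z 0 z y _ (by positivity) (by rw [f1]; match_scalars <;> field_simp <;> ring) (by unfold FF; ring)
  · exact cub_zero A B C x y z z 0 x _ (by positivity) (by rw [f2]; match_scalars <;> field_simp <;> ring) (by unfold FF; ring)
  · exact cub_zero A B C x y z y x 0 _ (by positivity) (by rw [f3]; match_scalars <;> field_simp <;> ring) (by unfold FF; ring)
  · exact cub_zero A B C x y z (z * (x + y) + y * (z + x)) (x * (z + x)) (x * (x + y)) _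
      (by positivity)
      (by rw [f2, f3, midpoint_eq_smul_add, invOf_eq_inv]; match_scalars <;> field_simp <;> ring)
      (by unfold FF; ring)
  · exact cub_zero A B C x y z (y * (y + z)) (x * (y + z) + z * (x + y)) (y * (x + y)) _
      (by positivity)
      (by rw [f1, f3, midpoint_eq_smul_add, invOf_eq_inv]; match_scalars <;> field_simp <;> ring)
      (by unfold FF; ring)
  · exact cub_zero A B C x y z (z * (y + z)) (z * (z + x)) (y * (z + x) + x * (y + z)) _
      (by positivity)
      (by rw [f1, f2, midpoint_eq_smul_add, invOf_eq_inv]; match_scalars <;> field_simp <;> ring)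
      (by unfold FF; ring)
  · exact cub_zero A B C x y z (y * z) (z * x) (x * y) _
      (by positivity)
      (by rw [hH, eO]; match_scalars <;> field_simp <;> ring)
      (by unfold FF; ring)
  · exact cub_zero A B C x y z (x * (y + z) + 2 * (y * z)) (y * (z + x) + 2 * (z * x))
      (z * (x + y) + 2 * (x * y)) _
      (by positivity)
      (by rw [hE, hH, eO, midpoint_eq_smul_add, invOf_eq_inv]; match_scalars <;> field_simp <;> ring)
      (by unfold FF; ring)
  · exact cub_zero A B C x y z ((y + z) * (y * (z + x) + z * (x + y)))
      ((z + x) * (z * (x + y) + x * (y + z))) ((x + y) * (x * (y + z) + y * (z + x))) _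
      (by positivity)
      (by rw [hGh, bary, f1, f2, f3]; match_scalars <;> field_simp <;> ring)
      (by unfold FF; ring)
  · exact cub_zero A B C x y z (y + z) (z + x) (x + y) _
      (by positivity)
      (by rw [hSy, bary])
      (by unfold FF; ring)
  · exact cub_zero A B C x y z (y ^ 2 * (z + x) * z + z ^ 2 * (x + y) * y)
      (z ^ 2 * (x + y) * x + x ^ 2 * (y + z) * z) (x ^ 2 * (y + z) * y + y ^ 2 * (z + x) * x) _
      (by positivity)
      (by rw [hSyh, bary, f1, f2, f3]; match_scalars <;> field_simp <;> ring)
      (by unfold FF; ring)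
  · exact cub_zero A B C x y z ((y + z) * (y * z)) ((z + x) * (z * x)) ((x + y) * (x * y)) _
      (by positivity)
      (by
        rw [hGOT, bary, show z + x + (x + y) - (y + z) = 2 * x by ring,
          show x + y + (y + z) - (z + x) = 2 * y by ring,
          show y + z + (z + x) - (x + y) = 2 * z by ring]
        match_scalars <;> field_simp <;> ring)
      (by unfold FF; ring)
end

section
/- Let A, B, C be a nondegenerate triangle in the Euclidean plane with circumcenter O, orthocenter H, centroid G, and de Longchamps point L = 2•O − H, and assume H ≠ O. Let d be the line through O perpendicular to the Euler line, i.e. the set of points p of the plane with ⟪p − O, H − O⟫ = 0. Then dist(G, H) = 2 · infDist(G, d) and dist(L, H) = 2 · infDist(L, d). (That is, the centroid G and the de Longchamps point L are the two vertices of a conic with focus H, eccentricity 2, and directrix the line through the circumcenter perpendicular to the Euler line.) -/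
open EuclideanGeometry RealInnerProductSpace

theorem infDist_aux (O v : EuclideanSpace ℝ (Fin 2)) (t : ℝ) :
    Metric.infDist (O + t • v) {p : EuclideanSpace ℝ (Fin 2) | ⟪p - O, v⟫ = 0} = |t| * ‖v‖ := by
  have hmem : O ∈ {p : EuclideanSpace ℝ (Fin 2) | ⟪p - O, v⟫ = 0} := by simp
  apply le_antisymm
  · refine (Metric.infDist_le_dist_of_mem hmem).trans ?_
    simp [dist_eq_norm, norm_smul]
  · rw [Metric.le_infDist ⟨O, hmem⟩]
    intro y hy
    have hy' : ⟪y - O, v⟫ = 0 := hy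
    have h1 : O + t • v - y = t • v - (y - O) := by abel
    have h2 : ⟪t • v, y - O⟫ = 0 := by
      rw [real_inner_smul_left, real_inner_comm, hy', mul_zero]
    rw [dist_eq_norm, h1, ← Real.norm_eq_abs, ← norm_smul]
    have h3 := norm_sub_sq_real (t • v) (y - O)
    rw [h2] at h3
    refine (sq_le_sq₀ (norm_nonneg _) (norm_nonneg _)).1 ?_
    nlinarith [sq_nonneg ‖y - O‖]

theorem stmt2 (A B C O : EuclideanSpace ℝ (Fin 2))
    (hABC : AffineIndependent ℝ ![A, B, C])
    (hO : dist O A = dist O B ∧ dist O A = dist O C)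
    (H G L : EuclideanSpace ℝ (Fin 2))
    (hH : H = A + B + C - (2 : ℝ) • O)
    (hG : G = (1 / 3 : ℝ) • A + (1 / 3 : ℝ) • B + (1 / 3 : ℝ) • C)
    (hL : L = (2 : ℝ) • O - H)
    (hHO : H ≠ O)
    (d : Set (EuclideanSpace ℝ (Fin 2)))
    (hd : d = {p : EuclideanSpace ℝ (Fin 2) | ⟪p - O, H - O⟫ = 0}) :
    dist G H = 2 * Metric.infDist G d ∧ dist L H = 2 * Metric.infDist L d := by
  have eG : G = O + (1 / 3 : ℝ) • (H - O) := by
    rw [hG, hH]; module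
  have eL : L = O + (-1 : ℝ) • (H - O) := by
    rw [hL]; module
  have dG : G - H = (-(2 / 3) : ℝ) • (H - O) := by
    rw [eG]; module
  have dL : L - H = (-2 : ℝ) • (H - O) := by
    rw [eL]; module
  constructor
  · rw [dist_eq_norm, dG, hd, eG, infDist_aux, norm_smul, Real.norm_eq_abs, abs_neg,
      abs_of_pos (by norm_num : (0 : ℝ) < 2 / 3), abs_of_pos (by norm_num : (0 : ℝ) < 1 / 3)]
    ring
  · rw [dist_eq_norm, dL, hd, eL, infDist_aux, norm_smul, Real.norm_eq_abs, abs_neg, abs_neg,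
      abs_of_pos (by norm_num : (0 : ℝ) < 2), abs_one]
    ring
end

section
/- Let A, B, C be a nondegenerate triangle in the Euclidean plane with side lengths a = dist B C, b = dist C A, c = dist A B, incenter I (barycentric weights (a, b, c)), circumcenter O, orthocenter H, and nine-point center E = midpoint(O, H). Let E₁ = midpoint(A, H), E₂ = midpoint(B, H), E₃ = midpoint(C, H) be the vertices of the Euler triangle, and M₁ = midpoint(B,C), M₂ = midpoint(C,A), M₃ = midpoint(A,B) the midpoints of the sides. Then there exists a nonzero real polynomial in two variables of total degree at most 3 vanishing at all ten points: E₁, E₂, E₃, M₁, M₂, M₃, midpoint(I, H), E, H, O. -/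
open EuclideanGeometry RealInnerProductSpace

open MvPolynomial in
noncomputable def linP (p q : EuclideanSpace ℝ (Fin 2)) : MvPolynomial (Fin 2) ℝ :=
  (X 0 - C (p 0)) * C (q 0 - p 0) + (X 1 - C (p 1)) * C (q 1 - p 1)

def dt (p q r : EuclideanSpace ℝ (Fin 2)) : ℝ :=
  (r 0 - p 0) * (q 0 - p 0) + (r 1 - p 1) * (q 1 - p 1)

theorem mvEval_linP (p q r : EuclideanSpace ℝ (Fin 2)) : mvEval (linP p q) r = dt p q r := by
  simp [mvEval, linP, dt]

open MvPolynomial in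
theorem deg_linP (p q : EuclideanSpace ℝ (Fin 2)) : (linP p q).totalDegree ≤ 1 := by
  have h : ∀ (i : Fin 2) (s t : ℝ),
      ((X i - C s) * C t : MvPolynomial (Fin 2) ℝ).totalDegree ≤ 1 := by
    intro i s t
    refine (totalDegree_mul _ _).trans ?_
    rw [totalDegree_C, add_zero]
    refine (totalDegree_sub _ _).trans ?_
    simp [totalDegree_X]
  exact (totalDegree_add _ _).trans (max_le (h _ _ _) (h _ _ _))

noncomputable def darb (A B C : EuclideanSpace ℝ (Fin 2)) : MvPolynomial (Fin 2) ℝ :=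
  linP B C * linP C A * linP A B - linP C B * linP A C * linP B A

theorem deg_darb (A B C : EuclideanSpace ℝ (Fin 2)) : (darb A B C).totalDegree ≤ 3 := by
  have h : ∀ p q r s t u : EuclideanSpace ℝ (Fin 2),
      (linP p q * linP r s * linP t u).totalDegree ≤ 3 := by
    intro p q r s t u
    have h1 := MvPolynomial.totalDegree_mul (linP p q * linP r s) (linP t u)
    have h2 := MvPolynomial.totalDegree_mul (linP p q) (linP r s)
    have := deg_linP p q
    have := deg_linP r s
    have := deg_linP t u
    omega
  exact (MvPolynomial.totalDegree_sub _ _).trans (max_le (h _ _ _ _ _ _) (h _ _ _ _ _ _))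

theorem eval_darb (A B C P : EuclideanSpace ℝ (Fin 2)) : mvEval (darb A B C) P =
    dt B C P * dt C A P * dt A B P - dt C B P * dt A C P * dt B A P := by
  simp only [← mvEval_linP]
  simp [mvEval, darb]

theorem darb_ne (A B C : EuclideanSpace ℝ (Fin 2))
    (hD : (B 0 - A 0) * (C 1 - A 1) - (B 1 - A 1) * (C 0 - A 0) ≠ 0) : darb A B C ≠ 0 := by
  intro h0
  set D := (B 0 - A 0) * (C 1 - A 1) - (B 1 - A 1) * (C 0 - A 0) with hDdef
  set m := dt A C B with hm
  set t := -(m ^ 2 + 1) / D with ht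
  have htD : t * D = -(m ^ 2 + 1) := by rw [ht]; field_simp
  have h := eval_darb A B C !₂[B 0 + t * (B 1 - C 1), B 1 + t * (C 0 - B 0)]
  rw [h0] at h
  have e0 : mvEval 0 !₂[B 0 + t * (B 1 - C 1), B 1 + t * (C 0 - B 0)] = 0 := by simp [mvEval]
  rw [e0] at h
  have e1 : dt B C !₂[B 0 + t * (B 1 - C 1), B 1 + t * (C 0 - B 0)] = 0 := by
    simp [dt]; ring
  have e2 : dt C B !₂[B 0 + t * (B 1 - C 1), B 1 + t * (C 0 - B 0)] =
      (B 0 - C 0) ^ 2 + (B 1 - C 1) ^ 2 := by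
    simp [dt]; ring
  have e3 : dt A C !₂[B 0 + t * (B 1 - C 1), B 1 + t * (C 0 - B 0)] = m - t * D := by
    simp [dt, hm, hDdef]; ring
  have e4 : dt B A !₂[B 0 + t * (B 1 - C 1), B 1 + t * (C 0 - B 0)] = t * D := by
    simp [dt, hDdef]; ring
  rw [e1, e2, e3, e4, htD] at h
  have p1 : 0 < (B 0 - C 0) ^ 2 + (B 1 - C 1) ^ 2 := by
    by_contra hn
    have q0 : B 0 - C 0 = 0 := by nlinarith [sq_nonneg (B 0 - C 0), sq_nonneg (B 1 - C 1)]
    have q1 : B 1 - C 1 = 0 := by nlinarith [sq_nonneg (B 0 - C 0), sq_nonneg (B 1 - C 1)]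
    apply hD
    rw [hDdef]
    linear_combination (C 1 - A 1) * q0 - (C 0 - A 0) * q1
  have p2 : 0 < m ^ 2 + 1 := by positivity
  have p3 : 0 < m - -(m ^ 2 + 1) := by nlinarith [sq_nonneg (m + 1), sq_nonneg (m - 1)]
  have := mul_pos (mul_pos p1 p3) p2
  linarith

theorem darb_pts (A B C Q J : EuclideanSpace ℝ (Fin 2)) (a b c : ℝ)
    (h1 : (Q 0 - A 0) ^ 2 + (Q 1 - A 1) ^ 2 = (Q 0 - B 0) ^ 2 + (Q 1 - B 1) ^ 2)
    (h2 : (Q 0 - A 0) ^ 2 + (Q 1 - A 1) ^ 2 = (Q 0 - C 0) ^ 2 + (Q 1 - C 1) ^ 2)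
    (ha : a ^ 2 = (B 0 - C 0) ^ 2 + (B 1 - C 1) ^ 2)
    (hb : b ^ 2 = (C 0 - A 0) ^ 2 + (C 1 - A 1) ^ 2)
    (hc : c ^ 2 = (A 0 - B 0) ^ 2 + (A 1 - B 1) ^ 2)
    (hs : a + b + c ≠ 0)
    (hJ : ∀ i, (a + b + c) * J i = a * A i + b * B i + c * C i) :
    mvEval (darb A B C) A = 0 ∧ mvEval (darb A B C) B = 0 ∧ mvEval (darb A B C) C = 0 ∧
    mvEval (darb A B C) ((2 : ℝ) • Q - A) = 0 ∧ mvEval (darb A B C) ((2 : ℝ) • Q - B) = 0 ∧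
    mvEval (darb A B C) ((2 : ℝ) • Q - C) = 0 ∧ mvEval (darb A B C) J = 0 ∧
    mvEval (darb A B C) Q = 0 ∧ mvEval (darb A B C) (A + B + C - (2 : ℝ) • Q) = 0 ∧
    mvEval (darb A B C) ((4 : ℝ) • Q - A - B - C) = 0 := by
  simp only [eval_darb]
  have z : ∀ p q : EuclideanSpace ℝ (Fin 2), dt p q p = 0 := by intro p q; simp [dt]
  refine ⟨?_, ?_, ?_, ?_, ?_, ?_, ?_, ?_, ?_, ?_⟩
  · simp [z]
  · simp [z]
  · simp [z]
  · have e1 : dt C A ((2 : ℝ) • Q - A) = 0 := by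
      simp [dt]; linarith only [h1, h2]
    have e2 : dt B A ((2 : ℝ) • Q - A) = 0 := by
      simp [dt]; linarith only [h1, h2]
    rw [e1, e2]; ring
  · have e1 : dt A B ((2 : ℝ) • Q - B) = 0 := by
      simp [dt]; linarith only [h1, h2]
    have e2 : dt C B ((2 : ℝ) • Q - B) = 0 := by
      simp [dt]; linarith only [h1, h2]
    rw [e1, e2]; ring
  · have e1 : dt B C ((2 : ℝ) • Q - C) = 0 := by
      simp [dt]; linarith only [h1, h2]
    have e2 : dt A C ((2 : ℝ) • Q - C) = 0 := by
      simp [dt]; linarith only [h1, h2]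
    rw [e1, e2]; ring
  · have j0 := hJ 0
    have j1 := hJ 1
    have e0 : dt B C J = a * (a + c - b) / 2 := by
      apply mul_left_cancel₀ hs
      unfold dt
      linear_combination (C 0 - B 0) * j0 + (C 1 - B 1) * j1 - c * ha - a / 2 * (ha + hc - hb)
    have e1 : dt C A J = b * (b + a - c) / 2 := by
      apply mul_left_cancel₀ hs
      unfold dt
      linear_combination (A 0 - C 0) * j0 + (A 1 - C 1) * j1 - a * hb - b / 2 * (hb + ha - hc)
    have e2 : dt A B J = c * (c + b - a) / 2 := by
      apply mul_left_cancel₀ hs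
      unfold dt
      linear_combination (B 0 - A 0) * j0 + (B 1 - A 1) * j1 - b * hc - c / 2 * (hc + hb - ha)
    have e3 : dt C B J = a * (a + b - c) / 2 := by
      apply mul_left_cancel₀ hs
      unfold dt
      linear_combination (B 0 - C 0) * j0 + (B 1 - C 1) * j1 - b * ha - a / 2 * (ha + hb - hc)
    have e4 : dt A C J = b * (b + c - a) / 2 := by
      apply mul_left_cancel₀ hs
      unfold dt
      linear_combination (C 0 - A 0) * j0 + (C 1 - A 1) * j1 - c * hb - b / 2 * (hb + hc - ha)
    have e5 : dt B A J = c * (c + a - b) / 2 := by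
      apply mul_left_cancel₀ hs
      unfold dt
      linear_combination (A 0 - B 0) * j0 + (A 1 - B 1) * j1 - a * hc - c / 2 * (hc + ha - hb)
    rw [e0, e1, e2, e3, e4, e5]; ring
  · have e0 : dt B C Q = dt C B Q := by
      simp [dt]; linarith only [h1, h2]
    have e1 : dt C A Q = dt A C Q := by
      simp [dt]; linarith only [h1, h2]
    have e2 : dt A B Q = dt B A Q := by
      simp [dt]; linarith only [h1, h2]
    rw [e0, e1, e2]; ring
  · have e0 : dt B C (A + B + C - (2 : ℝ) • Q) = dt B A (A + B + C - (2 : ℝ) • Q) := by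
      simp [dt]; linarith only [h1, h2]
    have e1 : dt C A (A + B + C - (2 : ℝ) • Q) = dt C B (A + B + C - (2 : ℝ) • Q) := by
      simp [dt]; linarith only [h1, h2]
    have e2 : dt A B (A + B + C - (2 : ℝ) • Q) = dt A C (A + B + C - (2 : ℝ) • Q) := by
      simp [dt]; linarith only [h1, h2]
    rw [e0, e1, e2]; ring
  · have e0 : dt B C ((4 : ℝ) • Q - A - B - C) = dt A C ((4 : ℝ) • Q - A - B - C) := by
      simp [dt]; linarith only [h1, h2]
    have e1 : dt C A ((4 : ℝ) • Q - A - B - C) = dt B A ((4 : ℝ) • Q - A - B - C) := by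
      simp [dt]; linarith only [h1, h2]
    have e2 : dt A B ((4 : ℝ) • Q - A - B - C) = dt C B ((4 : ℝ) • Q - A - B - C) := by
      simp [dt]; linarith only [h1, h2]
    rw [e0, e1, e2]; ring

theorem stmt5 (A B C O : EuclideanSpace ℝ (Fin 2))
    (hABC : AffineIndependent ℝ ![A, B, C])
    (a b c : ℝ) (ha : a = dist B C) (hb : b = dist C A) (hc : c = dist A B)
    (I H E E₁ E₂ E₃ M₁ M₂ M₃ : EuclideanSpace ℝ (Fin 2))
    (hI : I = bary A B C a b c)
    (hO : dist O A = dist O B ∧ dist O A = dist O C)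
    (hH : H = A + B + C - (2 : ℝ) • O)
    (hE : E = midpoint ℝ O H)
    (hE₁ : E₁ = midpoint ℝ A H) (hE₂ : E₂ = midpoint ℝ B H)
    (hE₃ : E₃ = midpoint ℝ C H)
    (hM₁ : M₁ = midpoint ℝ B C) (hM₂ : M₂ = midpoint ℝ C A)
    (hM₃ : M₃ = midpoint ℝ A B) :
    ∃ f : MvPolynomial (Fin 2) ℝ, f ≠ 0 ∧ f.totalDegree ≤ 3 ∧
      mvEval f E₁ = 0 ∧ mvEval f E₂ = 0 ∧ mvEval f E₃ = 0 ∧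
      mvEval f M₁ = 0 ∧ mvEval f M₂ = 0 ∧ mvEval f M₃ = 0 ∧
      mvEval f (midpoint ℝ I H) = 0 ∧ mvEval f E = 0 ∧
      mvEval f H = 0 ∧ mvEval f O = 0 := by
  have nd : (B 0 - A 0) * (C 1 - A 1) - (B 1 - A 1) * (C 0 - A 0) ≠ 0 := by
    intro h
    rw [affineIndependent_iff_not_collinear_set] at hABC
    apply hABC
    by_cases hBA : B = A
    · subst hBA
      simpa using collinear_pair ℝ B C
    · rw [collinear_iff_of_mem (p₀ := A) (by simp)]
      refine ⟨B - A, ?_⟩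
      have p1 : (B 0 - A 0) ^ 2 + (B 1 - A 1) ^ 2 ≠ 0 := by
        intro hn
        have q0 : B 0 - A 0 = 0 := by nlinarith [sq_nonneg (B 0 - A 0), sq_nonneg (B 1 - A 1)]
        have q1 : B 1 - A 1 = 0 := by nlinarith [sq_nonneg (B 0 - A 0), sq_nonneg (B 1 - A 1)]
        apply hBA
        ext i; fin_cases i
        · simpa [sub_eq_zero] using q0
        · simpa [sub_eq_zero] using q1
      intro p hp
      simp only [Set.mem_insert_iff, Set.mem_singleton_iff] at hp
      rcases hp with rfl | rfl | rfl
      · exact ⟨0, by simp⟩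
      · exact ⟨1, by simp⟩
      · refine ⟨((p 0 - A 0) * (B 0 - A 0) + (p 1 - A 1) * (B 1 - A 1)) /
          ((B 0 - A 0) ^ 2 + (B 1 - A 1) ^ 2), ?_⟩
        ext i; fin_cases i
        · simp
          field_simp
          linear_combination (-(B 1 - A 1)) * h
        · simp
          field_simp
          linear_combination (B 0 - A 0) * h
  have dsq : ∀ P R : EuclideanSpace ℝ (Fin 2),
      dist P R ^ 2 = (P 0 - R 0) ^ 2 + (P 1 - R 1) ^ 2 := by
    intro P R
    rw [EuclideanSpace.dist_eq, Real.sq_sqrt (by positivity)]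
    simp [Real.dist_eq, sq_abs]
  have o1 := dsq O A
  have o2 := dsq O A
  rw [hO.1, dsq] at o1
  rw [hO.2, dsq] at o2
  have a2 := dsq B C
  have b2 := dsq C A
  have c2 := dsq A B
  rw [← ha] at a2
  rw [← hb] at b2
  rw [← hc] at c2
  have hs : a + b + c ≠ 0 := by
    have ha0 : 0 ≤ a := ha ▸ dist_nonneg
    have hb0 : 0 ≤ b := hb ▸ dist_nonneg
    have hc0 : 0 ≤ c := hc ▸ dist_nonneg
    intro h
    have hc' : c = 0 := by linarith
    rw [hc', eq_comm, dist_eq_zero] at hc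
    apply nd; rw [hc]; ring
  have mid : ∀ (P R : EuclideanSpace ℝ (Fin 2)) (i : Fin 2),
      (midpoint ℝ P R) i = (P i + R i) / 2 := by
    intro P R i
    rw [midpoint_eq_smul_add]; simp; ring
  have Hi : ∀ i, H i = A i + B i + C i - 2 * O i := by intro i; rw [hH]; simp
  have Ei : ∀ i, E i = (A i + B i + C i - O i) / 2 := by
    intro i; rw [hE, mid, Hi]; ring
  have E1i : ∀ i, E₁ i = (A i + H i) / 2 := by intro i; rw [hE₁, mid]
  have E2i : ∀ i, E₂ i = (B i + H i) / 2 := by intro i; rw [hE₂, mid]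
  have E3i : ∀ i, E₃ i = (C i + H i) / 2 := by intro i; rw [hE₃, mid]
  have key := darb_pts E₁ E₂ E₃ E (midpoint ℝ I H) (a / 2) (b / 2) (c / 2)
    (by simp only [E1i, E2i, Hi, Ei]; linear_combination (-1 / 4) * o1)
    (by simp only [E1i, E3i, Hi, Ei]; linear_combination (-1 / 4) * o2)
    (by simp only [E2i, E3i]; linear_combination (1 / 4) * a2)
    (by simp only [E1i, E3i]; linear_combination (1 / 4) * b2)
    (by simp only [E1i, E2i]; linear_combination (1 / 4) * c2)
    (by intro h; apply hs; linarith)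
    (by
      intro i
      rw [mid, E1i, E2i, E3i, hI]
      simp [bary]
      field_simp
      ring)
  have r1 : (2 : ℝ) • E - E₁ = M₁ := by
    ext i; rw [hM₁, mid]; simp [Ei, E1i, Hi]; ring
  have r2 : (2 : ℝ) • E - E₂ = M₂ := by
    ext i; rw [hM₂, mid]; simp [Ei, E2i, Hi]; ring
  have r3 : (2 : ℝ) • E - E₃ = M₃ := by
    ext i; rw [hM₃, mid]; simp [Ei, E3i, Hi]; ring
  have r4 : E₁ + E₂ + E₃ - (2 : ℝ) • E = H := by
    ext i; simp [Ei, E1i, E2i, E3i, Hi]; ring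
  have r5 : (4 : ℝ) • E - E₁ - E₂ - E₃ = O := by
    ext i; simp [Ei, E1i, E2i, E3i, Hi]; ring
  rw [r1, r2, r3, r4, r5] at key
  refine ⟨darb E₁ E₂ E₃, darb_ne _ _ _ ?_, deg_darb _ _ _, key⟩
  simp only [E1i, E2i, E3i]
  intro h
  apply nd
  linear_combination 4 * h
end

section
/- Let A, B, C be a nondegenerate triangle in the Euclidean plane with side lengths a = dist B C, b = dist C A, c = dist A B, incenter I (barycentric weights (a, b, c)), and excenters I₁, I₂, I₃ (barycentric weights (−a, b, c), (a, −b, c), (a, b, −c)). Then the orthocenter of the excentral triangle I₁I₂I₃ equals the incenter I of triangle ABC. -/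
open EuclideanGeometry RealInnerProductSpace

theorem bary_key (A B C : EuclideanSpace ℝ (Fin 2)) (a b c : ℝ)
    (hb : b = dist C A) (hc : c = dist A B)
    (h0 : a + b + c ≠ 0) (h1 : -a + b + c ≠ 0) (h2 : a + -b + c ≠ 0) (h3 : a + b + -c ≠ 0) :
    ⟪bary A B C a b c - bary A B C (-a) b c,
      bary A B C a b (-c) - bary A B C a (-b) c⟫ = 0 := by
  have e1 : bary A B C a b c - bary A B C (-a) b c =
      (1 / (a + b + c) - 1 / (-a + b + c)) • (b • (B - A) + c • (C - A)) := by
    ext i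
    simp only [bary, PiLp.add_apply, PiLp.sub_apply, PiLp.smul_apply, smul_eq_mul]
    field_simp
    ring
  have e2 : bary A B C a b (-c) - bary A B C a (-b) c =
      (1 / (a + b + -c) + 1 / (a + -b + c)) • (b • (B - A) - c • (C - A)) := by
    ext i
    simp only [bary, PiLp.add_apply, PiLp.sub_apply, PiLp.smul_apply, smul_eq_mul]
    field_simp
    ring
  have hb' : ‖C - A‖ = b := by rw [hb, dist_eq_norm]
  have hc' : ‖B - A‖ = c := by rw [hc, dist_comm, dist_eq_norm]
  have e3 : ⟪b • (B - A) + c • (C - A), b • (B - A) - c • (C - A)⟫ = 0 := by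
    generalize B - A = u at hc' ⊢
    generalize C - A = v at hb' ⊢
    simp only [inner_add_left, inner_sub_right, real_inner_smul_left, real_inner_smul_right,
      real_inner_self_eq_norm_sq, norm_smul, mul_pow, Real.norm_eq_abs, sq_abs, hb', hc',
      real_inner_comm u v]
    ring
  rw [e1, e2, real_inner_smul_left, real_inner_smul_right, e3]
  simp

theorem tri_strict (A B C : EuclideanSpace ℝ (Fin 2)) (h : ¬ Collinear ℝ {A, B, C}) :
    dist A C < dist A B + dist B C := by
  refine lt_of_le_of_ne (dist_triangle _ _ _) fun e => h ?_
  exact (dist_add_dist_eq_iff.1 e.symm).collinear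

theorem bary_rot (A B C : EuclideanSpace ℝ (Fin 2)) (a b c : ℝ) :
    bary A B C a b c = bary B C A b c a := by
  unfold bary
  rw [show b + c + a = a + b + c by ring]
  abel

theorem stmt9 (A B C : EuclideanSpace ℝ (Fin 2))
    (hABC : AffineIndependent ℝ ![A, B, C])
    (a b c : ℝ) (ha : a = dist B C) (hb : b = dist C A) (hc : c = dist A B)
    (I I₁ I₂ I₃ : EuclideanSpace ℝ (Fin 2))
    (hI : I = bary A B C a b c)
    (hI₁ : I₁ = bary A B C (-a) b c)
    (hI₂ : I₂ = bary A B C a (-b) c)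
    (hI₃ : I₃ = bary A B C a b (-c)) :
    ⟪I - I₁, I₃ - I₂⟫ = 0 ∧ ⟪I - I₂, I₁ - I₃⟫ = 0 ∧ ⟪I - I₃, I₂ - I₁⟫ = 0 := by
  have hn := affineIndependent_iff_not_collinear_set.1 hABC
  have t1 := tri_strict A B C hn
  have t2 := tri_strict B C A (by
    rwa [show ({B, C, A} : Set (EuclideanSpace ℝ (Fin 2))) = {A, B, C} by ext; simp; tauto])
  have t3 := tri_strict C A B (by
    rwa [show ({C, A, B} : Set (EuclideanSpace ℝ (Fin 2))) = {A, B, C} by ext; simp; tauto])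
  rw [dist_comm A C, ← ha, ← hb, ← hc] at t1
  rw [dist_comm B A, ← ha, ← hb, ← hc] at t2
  rw [dist_comm C B, ← ha, ← hb, ← hc] at t3
  have k1 := bary_key A B C a b c hb hc (by intro h; linarith) (by intro h; linarith) (by intro h; linarith) (by intro h; linarith)
  have k2 := bary_key B C A b c a hc ha (by intro h; linarith) (by intro h; linarith) (by intro h; linarith) (by intro h; linarith)
  have k3 := bary_key C A B c a b ha hb (by intro h; linarith) (by intro h; linarith) (by intro h; linarith) (by intro h; linarith)
  simp only [← bary_rot A B C] at k2
  simp only [bary_rot C A B] at k3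
  subst hI hI₁ hI₂ hI₃
  exact ⟨k1, k2, k3⟩
end

section
/- Let A, B, C be a nondegenerate triangle in the Euclidean plane with side lengths a = dist B C, b = dist C A, c = dist A B, circumcenter O, and excenters I₁, I₂, I₃ (barycentric weights (−a, b, c), (a, −b, c), (a, b, −c)). Then the nine-point center of the excentral triangle I₁I₂I₃ — the midpoint of the circumcenter and the orthocenter of I₁I₂I₃ — equals the circumcenter O of triangle ABC. -/
open EuclideanGeometry RealInnerProductSpace

theorem aux_norm (x0 x1 y0 y1 z0 z1 a b c R q r j0 j1 k0 k1 : ℝ)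
    (hx : x0^2+x1^2 = R) (hy : y0^2+y1^2 = R) (hz : z0^2+z1^2 = R)
    (ha : a^2 = (y0-z0)^2+(y1-z1)^2) (hb : b^2 = (z0-x0)^2+(z1-x1)^2)
    (hc : c^2 = (x0-y0)^2+(x1-y1)^2)
    (hq : q = a - b + c) (hr : r = a + b - c) (hq0 : q ≠ 0) (hr0 : r ≠ 0)
    (hj0 : q * j0 = a*x0 - b*y0 + c*z0) (hj1 : q * j1 = a*x1 - b*y1 + c*z1)
    (hk0 : r * k0 = a*x0 + b*y0 - c*z0) (hk1 : r * k1 = a*x1 + b*y1 - c*z1) :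
    (j0+k0)^2 + (j1+k1)^2 = 4 * R := by
  have e0 : q * r * (j0+k0) = 2 * (a^2*x0 - (b-c)*(b*y0-c*z0)) := by
    have : q * r * (j0+k0) = r * (q*j0) + q * (r*k0) := by ring
    rw [this, hj0, hk0, hq, hr]; ring
  have e1 : q * r * (j1+k1) = 2 * (a^2*x1 - (b-c)*(b*y1-c*z1)) := by
    have : q * r * (j1+k1) = r * (q*j1) + q * (r*k1) := by ring
    rw [this, hj1, hk1, hq, hr]; ring
  have hyz : y0*z0+y1*z1 = R - a^2/2 := by linarith
  have hxz : x0*z0+x1*z1 = R - b^2/2 := by linarith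
  have hxy : x0*y0+x1*y1 = R - c^2/2 := by linarith
  have hqr : q * r = a^2 - (b-c)^2 := by rw [hq, hr]; ring
  have key : (q*r)^2 * ((j0+k0)^2 + (j1+k1)^2) = (q*r)^2 * (4*R) := by
    have h1 : (q*r)^2 * ((j0+k0)^2 + (j1+k1)^2)
        = (q * r * (j0+k0))^2 + (q * r * (j1+k1))^2 := by ring
    have h2 : (a^2*x0 - (b-c)*(b*y0-c*z0))^2 + (a^2*x1 - (b-c)*(b*y1-c*z1))^2
        = a^4*(x0^2+x1^2) - 2*a^2*(b-c)*(b*(x0*y0+x1*y1) - c*(x0*z0+x1*z1))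
          + (b-c)^2*(b^2*(y0^2+y1^2) - 2*b*c*(y0*z0+y1*z1) + c^2*(z0^2+z1^2)) := by ring
    rw [hx, hy, hz, hyz, hxz, hxy] at h2
    rw [h1, e0, e1, hqr]
    linear_combination 4 * h2
  exact mul_left_cancel₀ (pow_ne_zero 2 (mul_ne_zero hq0 hr0)) key

theorem aux_main (x0 x1 y0 y1 z0 z1 a b c R p q r i0 i1 j0 j1 k0 k1 w0 w1 : ℝ)
    (hx : x0^2+x1^2 = R) (hy : y0^2+y1^2 = R) (hz : z0^2+z1^2 = R)
    (ha : a^2 = (y0-z0)^2+(y1-z1)^2) (hb : b^2 = (z0-x0)^2+(z1-x1)^2)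
    (hc : c^2 = (x0-y0)^2+(x1-y1)^2)
    (hp : p = -a + b + c) (hq : q = a - b + c) (hr : r = a + b - c)
    (hp0 : p ≠ 0) (hq0 : q ≠ 0) (hr0 : r ≠ 0)
    (ha0 : a ≠ 0) (hb0 : b ≠ 0) (hc0 : c ≠ 0)
    (hd : (y0-x0)*(z1-x1) - (y1-x1)*(z0-x0) ≠ 0)
    (hi0 : p * i0 = -a*x0 + b*y0 + c*z0) (hi1 : p * i1 = -a*x1 + b*y1 + c*z1)
    (hj0 : q * j0 = a*x0 - b*y0 + c*z0) (hj1 : q * j1 = a*x1 - b*y1 + c*z1)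
    (hk0 : r * k0 = a*x0 + b*y0 - c*z0) (hk1 : r * k1 = a*x1 + b*y1 - c*z1)
    (h12 : (w0-i0)^2+(w1-i1)^2 = (w0-j0)^2+(w1-j1)^2)
    (h13 : (w0-i0)^2+(w1-i1)^2 = (w0-k0)^2+(w1-k1)^2) :
    w0 = i0+j0+k0 ∧ w1 = i1+j1+k1 := by
  have n1 := aux_norm x0 x1 y0 y1 z0 z1 a b c R q r j0 j1 k0 k1 hx hy hz ha hb hc hq hr hq0 hr0
    hj0 hj1 hk0 hk1
  have n2 := aux_norm y0 y1 z0 z1 x0 x1 b c a R r p k0 k1 i0 i1 hy hz hx hb hc ha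
    (by linarith) (by linarith) hr0 hp0
    (by linarith) (by linarith) (by linarith) (by linarith)
  have n3 := aux_norm z0 z1 x0 x1 y0 y1 c a b R p q i0 i1 j0 j1 hz hx hy hc ha hb
    (by linarith) (by linarith) hp0 hq0
    (by linarith) (by linarith) (by linarith) (by linarith)
  obtain ⟨v0, hv0⟩ : ∃ v0, v0 = w0 - (i0+j0+k0) := ⟨_, rfl⟩
  obtain ⟨v1, hv1⟩ : ∃ v1, v1 = w1 - (i1+j1+k1) := ⟨_, rfl⟩
  obtain rfl : w0 = v0 + (i0+j0+k0) := by linarith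
  obtain rfl : w1 = v1 + (i1+j1+k1) := by linarith
  clear hv0 hv1
  have m2 : v0*j0+v1*j1 = v0*i0+v1*i1 := by linarith
  have m3 : v0*k0+v1*k1 = v0*i0+v1*i1 := by linarith
  obtain ⟨m, hm⟩ : ∃ m, m = v0*i0+v1*i1 := ⟨_, rfl⟩
  rw [← hm] at m2 m3
  have f1 : -a*(v0*x0+v1*x1-m) + b*(v0*y0+v1*y1-m) + c*(v0*z0+v1*z1-m) = 0 := by
    linear_combination (-v0)*hi0 - v1*hi1 - p*hm + m*hp
  have f2 : a*(v0*x0+v1*x1-m) - b*(v0*y0+v1*y1-m) + c*(v0*z0+v1*z1-m) = 0 := by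
    linear_combination (-v0)*hj0 - v1*hj1 + q*m2 + m*hq
  have f3 : a*(v0*x0+v1*x1-m) + b*(v0*y0+v1*y1-m) - c*(v0*z0+v1*z1-m) = 0 := by
    linear_combination (-v0)*hk0 - v1*hk1 + r*m3 + m*hr
  have g1 : v0*x0+v1*x1-m = 0 := (mul_eq_zero.1 (by linarith : a*(v0*x0+v1*x1-m) = 0)).resolve_left ha0
  have g2 : v0*y0+v1*y1-m = 0 := (mul_eq_zero.1 (by linarith : b*(v0*y0+v1*y1-m) = 0)).resolve_left hb0
  have g3 : v0*z0+v1*z1-m = 0 := (mul_eq_zero.1 (by linarith : c*(v0*z0+v1*z1-m) = 0)).resolve_left hc0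
  have z0' : v0 = 0 := by
    refine (mul_eq_zero.1 (?_ : ((y0-x0)*(z1-x1) - (y1-x1)*(z0-x0)) * v0 = 0)).resolve_left hd
    linear_combination (z1-x1)*(g2-g1) - (y1-x1)*(g3-g1)
  have z1' : v1 = 0 := by
    refine (mul_eq_zero.1 (?_ : ((y0-x0)*(z1-x1) - (y1-x1)*(z0-x0)) * v1 = 0)).resolve_left hd
    linear_combination (y0-x0)*(g3-g1) - (z0-x0)*(g2-g1)
  constructor <;> linarith

theorem aux_sq (x y : ℝ) (h : 0 ^ 2 = x^2 + y^2) : x = 0 ∧ y = 0 := by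
  constructor <;> nlinarith [sq_nonneg x, sq_nonneg y]

theorem aux_det (A B C : EuclideanSpace ℝ (Fin 2)) (h : AffineIndependent ℝ ![A, B, C]) :
    (B 0 - A 0)*(C 1 - A 1) - (B 1 - A 1)*(C 0 - A 0) ≠ 0 := by
  intro hd
  rw [affineIndependent_iff] at h
  have hh : ∀ s t : ℝ, s * (B 0 - A 0) + t * (C 0 - A 0) = 0 →
      s * (B 1 - A 1) + t * (C 1 - A 1) = 0 → s = 0 ∧ t = 0 := by
    intro s t h0 h1
    have := h Finset.univ ![-s-t, s, t] (by simp [Fin.sum_univ_three]; ring) (by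
      ext i
      fin_cases i
      · simp [Fin.sum_univ_three]; linarith
      · simp [Fin.sum_univ_three]; linarith)
    exact ⟨this 1 (Finset.mem_univ _), this 2 (Finset.mem_univ _)⟩
  have h1 := hh (C 1 - A 1) (-(B 1 - A 1)) (by linarith) (by ring)
  have h0 := hh (C 0 - A 0) (-(B 0 - A 0)) (by ring) (by linarith)
  have := hh 1 0 (by linarith) (by linarith)
  exact one_ne_zero this.1

theorem aux_dist (P Q : EuclideanSpace ℝ (Fin 2)) :
    dist P Q ^ 2 = (P 0 - Q 0)^2 + (P 1 - Q 1)^2 := by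
  rw [EuclideanSpace.dist_eq, Real.sq_sqrt (by positivity)]
  simp [Fin.sum_univ_two, Real.dist_eq, sq_abs]

theorem aux_bary (A B C O : EuclideanSpace ℝ (Fin 2)) (u v w : ℝ) (h : u + v + w ≠ 0) (i : Fin 2) :
    (u + v + w) * (bary A B C u v w i - O i)
      = u * (A i - O i) + v * (B i - O i) + w * (C i - O i) := by
  simp [bary]
  field_simp
  ring

theorem stmt10 (A B C O O' : EuclideanSpace ℝ (Fin 2))
    (hABC : AffineIndependent ℝ ![A, B, C])
    (a b c : ℝ) (ha : a = dist B C) (hb : b = dist C A) (hc : c = dist A B)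
    (I₁ I₂ I₃ H' : EuclideanSpace ℝ (Fin 2))
    (hI₁ : I₁ = bary A B C (-a) b c)
    (hI₂ : I₂ = bary A B C a (-b) c)
    (hI₃ : I₃ = bary A B C a b (-c))
    (hO : dist O A = dist O B ∧ dist O A = dist O C)
    (hO' : dist O' I₁ = dist O' I₂ ∧ dist O' I₁ = dist O' I₃)
    (hH' : H' = I₁ + I₂ + I₃ - (2 : ℝ) • O') :
    midpoint ℝ O' H' = O := by
  have hd := aux_det A B C hABC
  have a2 := aux_dist B C
  have b2 := aux_dist C A
  have c2 := aux_dist A B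
  rw [← ha] at a2
  rw [← hb] at b2
  rw [← hc] at c2
  have heron : (a+b+c)*((-a+b+c)*((a+-b+c)*(a+b+-c)))
      = 4*((B 0 - A 0)*(C 1 - A 1) - (B 1 - A 1)*(C 0 - A 0))^2 := by
    have : (a+b+c)*((-a+b+c)*((a+-b+c)*(a+b+-c)))
      = 4*b^2*c^2 - (b^2+c^2-a^2)^2 := by ring
    rw [this, a2, b2, c2]; ring
  have hne : (a+b+c)*((-a+b+c)*((a+-b+c)*(a+b+-c))) ≠ 0 := by
    rw [heron]; exact mul_ne_zero (by norm_num) (pow_ne_zero 2 hd)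
  have hp0 := left_ne_zero_of_mul (right_ne_zero_of_mul hne)
  have hq0 := left_ne_zero_of_mul (right_ne_zero_of_mul (right_ne_zero_of_mul hne))
  have hr0 := right_ne_zero_of_mul (right_ne_zero_of_mul (right_ne_zero_of_mul hne))
  have hA : a ≠ 0 := by
    rintro h0
    apply hd
    have h := a2
    rw [h0] at h
    obtain ⟨e0, e1⟩ := aux_sq _ _ h
    linear_combination (C 1 - A 1) * e0 - (C 0 - A 0) * e1
  have hB : b ≠ 0 := by
    rintro h0
    apply hd
    have h := b2
    rw [h0] at h
    obtain ⟨e0, e1⟩ := aux_sq _ _ h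
    rw [e0, e1]; ring
  have hC : c ≠ 0 := by
    rintro h0
    apply hd
    have h := c2
    rw [h0] at h
    obtain ⟨e0, e1⟩ := aux_sq _ _ h
    linear_combination (-(C 1 - A 1)) * e0 + (C 0 - A 0) * e1
  have o1 := aux_dist O A
  have o2 := aux_dist O B
  have o3 := aux_dist O C
  rw [← hO.1] at o2
  rw [← hO.2] at o3
  have d1 := aux_dist O' I₁
  have d2 := aux_dist O' I₂
  have d3 := aux_dist O' I₃
  rw [← hO'.1] at d2
  rw [← hO'.2] at d3
  have s1 := aux_bary A B C O (-a) b c hp0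
  have s2 := aux_bary A B C O a (-b) c hq0
  have s3 := aux_bary A B C O a b (-c) hr0
  rw [← hI₁] at s1
  rw [← hI₂] at s2
  rw [← hI₃] at s3
  obtain ⟨r0, r1⟩ := aux_main (A 0 - O 0) (A 1 - O 1) (B 0 - O 0) (B 1 - O 1) (C 0 - O 0) (C 1 - O 1)
    a b c (dist O A ^ 2) (-a+b+c) (a+-b+c) (a+b+-c)
    (I₁ 0 - O 0) (I₁ 1 - O 1) (I₂ 0 - O 0) (I₂ 1 - O 1) (I₃ 0 - O 0) (I₃ 1 - O 1)
    (O' 0 - O 0) (O' 1 - O 1)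
    (by linarith) (by linarith) (by linarith) (by linarith) (by linarith) (by linarith)
    (by ring) (by ring) (by ring) hp0 hq0 hr0 hA hB hC
    (by intro h; apply hd; linarith)
    (by linarith [s1 0]) (by linarith [s1 1]) (by linarith [s2 0]) (by linarith [s2 1])
    (by linarith [s3 0]) (by linarith [s3 1])
    (by linarith) (by linarith)
  rw [midpoint_eq_smul_add, hH']
  ext i
  fin_cases i
  · simp; linarith
  · simp; linarith
end

section
/- Let A, B, C be a nondegenerate triangle in the Euclidean plane with side lengths a = dist B C, b = dist C A, c = dist A B, incenter I (barycentric weights (a, b, c)), circumcenter O, and excenters I₁, I₂, I₃ (barycentric weights (−a, b, c), (a, −b, c), (a, b, −c)). Then the circumcenter of the excentral triangle I₁I₂I₃ (the Bevan point) equals 2•O − I, the reflection of the incenter in the circumcenter. -/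
open EuclideanGeometry RealInnerProductSpace

theorem tri11 (p1 p2 q1 q2 a b c : ℝ) (ha0 : 0 ≤ a) (hb0 : 0 ≤ b) (hc0 : 0 ≤ c)
    (ha : a^2 = q1^2+q2^2) (hb : b^2 = p1^2+p2^2) (hc : c^2 = (p1-q1)^2+(p2-q2)^2)
    (hdet : p1*q2-p2*q1 ≠ 0) :
    0 < b+c-a ∧ 0 < a+c-b ∧ 0 < a ∧ 0 < b ∧ 0 < c := by
  have hd2 : 0 < (p1*q2-p2*q1)^2 := by positivity
  have hab : (a*b)^2 = (p1*q1+p2*q2)^2 + (p1*q2-p2*q1)^2 := by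
    rw [mul_pow, ha, hb]; ring
  have hab1 : p1*q1+p2*q2 < a*b := by
    apply lt_of_pow_lt_pow_left₀ 2 (by positivity); linarith
  have hst : 0 < (b+c-a)*(a+c-b) := by nlinarith
  have hapos : 0 < a := by
    rcases ha0.eq_or_lt with h | h
    · subst h; nlinarith [sq_nonneg (p1*q1+p2*q2)]
    · exact h
  have hbpos : 0 < b := by
    rcases hb0.eq_or_lt with h | h
    · subst h; nlinarith [sq_nonneg (p1*q1+p2*q2)]
    · exact h
  have hcpos : 0 < c := by
    rcases hc0.eq_or_lt with h | h
    · subst h; nlinarith [sq_nonneg (a-b)]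
    · exact h
  have hs : 0 < b+c-a := by
    by_contra h
    have : 0 < a+c-b := by linarith
    nlinarith
  have ht : 0 < a+c-b := by
    by_contra h
    nlinarith
  exact ⟨hs, ht, hapos, hbpos, hcpos⟩

theorem key11 (p1 p2 q1 q2 o1 o2 x1 x2 a b c : ℝ) (ha0 : 0 ≤ a) (hb0 : 0 ≤ b) (hc0 : 0 ≤ c)
    (ha : a^2 = q1^2+q2^2) (hb : b^2 = p1^2+p2^2) (hc : c^2 = (p1-q1)^2+(p2-q2)^2)
    (hdet : p1*q2-p2*q1 ≠ 0)
    (hOA : o1^2+o2^2 = (o1-p1)^2+(o2-p2)^2)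
    (hOB : o1^2+o2^2 = (o1-q1)^2+(o2-q2)^2)
    (hX : (x1 - (b*q1-a*p1)/(b+c-a))^2 + (x2 - (b*q2-a*p2)/(b+c-a))^2
      = (x1 + (b*q1-a*p1)/(a+c-b))^2 + (x2 + (b*q2-a*p2)/(a+c-b))^2) :
    0 < b+c-a ∧ 0 < a+c-b ∧ 0 < a ∧ 0 < b ∧ 0 < c ∧
    (x1 - 2*o1 + (a*p1+b*q1)/(a+b+c))*(b*q1-a*p1) +
    (x2 - 2*o2 + (a*p2+b*q2)/(a+b+c))*(b*q2-a*p2) = 0 := by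
  obtain ⟨hs, ht, hapos, hbpos, hcpos⟩ := tri11 p1 p2 q1 q2 a b c ha0 hb0 hc0 ha hb hc hdet
  refine ⟨hs, ht, hapos, hbpos, hcpos, ?_⟩
  obtain ⟨u1, hu1⟩ : ∃ u, u = b*q1-a*p1 := ⟨_, rfl⟩
  obtain ⟨u2, hu2⟩ : ∃ u, u = b*q2-a*p2 := ⟨_, rfl⟩
  have hu : u1^2+u2^2 = a*b*((b+c-a)*(a+c-b)) := by
    rw [hu1, hu2]
    linear_combination (-b^2+a*b)*ha + (-a^2+a*b)*hb - a*b*hc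
  have hin : (a*p1+b*q1)*u1 + (a*p2+b*q2)*u2 = 0 := by
    rw [hu1, hu2]
    linear_combination (-b^2)*ha + a^2*hb
  have ho : 2*(o1*u1+o2*u2) = a*b*(a-b) := by
    rw [hu1, hu2]
    linear_combination b*hOB - a*hOA - b*ha + a*hb
  rw [← hu1, ← hu2] at hX ⊢
  have hx : x1*u1+x2*u2 = a*b*(a-b) := by
    obtain ⟨s, hs'⟩ : ∃ s, s = b+c-a := ⟨_, rfl⟩
    obtain ⟨t, ht'⟩ : ∃ t, t = a+c-b := ⟨_, rfl⟩
    rw [← hs', ← ht'] at hX hu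
    rw [← hs'] at hs
    rw [← ht'] at ht
    have e : a - b = (t-s)/2 := by rw [hs', ht']; ring
    rw [e]
    field_simp at hX
    have h2 : s*t*(s+t) * (2*(x1*u1+x2*u2) - a*b*(t-s)) = 0 := by
      linear_combination -hX + (t^2-s^2)*hu
    have h3 : s*t*(s+t) ≠ 0 := by positivity
    have := (mul_eq_zero.1 h2).resolve_left h3
    linarith
  have hn : a+b+c ≠ 0 := by positivity
  have h4 : (a*p1+b*q1)/(a+b+c)*u1 + (a*p2+b*q2)/(a+b+c)*u2 = 0 := by
    rw [div_mul_eq_mul_div, div_mul_eq_mul_div, ← add_div, hin, zero_div]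
  linear_combination h4 + hx - ho

theorem stmt11 (A B C O Be : EuclideanSpace ℝ (Fin 2))
    (hABC : AffineIndependent ℝ ![A, B, C])
    (a b c : ℝ) (ha : a = dist B C) (hb : b = dist C A) (hc : c = dist A B)
    (I I₁ I₂ I₃ : EuclideanSpace ℝ (Fin 2))
    (hI : I = bary A B C a b c)
    (hI₁ : I₁ = bary A B C (-a) b c)
    (hI₂ : I₂ = bary A B C a (-b) c)
    (hI₃ : I₃ = bary A B C a b (-c))
    (hO : dist O A = dist O B ∧ dist O A = dist O C)
    (hBe : dist Be I₁ = dist Be I₂ ∧ dist Be I₁ = dist Be I₃) :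
    Be = (2 : ℝ) • O - I := by
  have hdet : (A 0 - C 0)*(B 1 - C 1) - (A 1 - C 1)*(B 0 - C 0) ≠ 0 := by
    intro h0
    rw [affineIndependent_iff_linearIndependent_vsub ℝ _ (2 : Fin 3)] at hABC
    have hli : LinearIndependent ℝ ![A - C, B - C] := by
      have := hABC.comp (fun i : Fin 2 => (⟨![0, 1] i, by fin_cases i <;> decide⟩ : {x : Fin 3 // x ≠ 2}))
        (by intro i j h; fin_cases i <;> fin_cases j <;> simp_all)
      convert this using 1
      · ext i j
        fin_cases i <;> simp
      · rfl
    rw [LinearIndependent.pair_iff] at hli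
    have h1 := hli (B 1 - C 1) (-(A 1 - C 1)) (by
      ext i; fin_cases i
      · simp; linarith
      · simp; ring)
    have h2 := hli (B 0 - C 0) (-(A 0 - C 0)) (by
      ext i; fin_cases i
      · simp; ring
      · simp; linarith)
    have h3 := hli 1 0 (by
      ext i; fin_cases i
      · simp; linarith [h2.2]
      · simp; linarith [h1.2])
    exact one_ne_zero h3.1
  have ha0 : 0 ≤ a := ha ▸ dist_nonneg
  have hb0 : 0 ≤ b := hb ▸ dist_nonneg
  have hc0 : 0 ≤ c := hc ▸ dist_nonneg
  have dsq : ∀ P Q : EuclideanSpace ℝ (Fin 2), dist P Q ^ 2 = (P 0 - Q 0)^2 + (P 1 - Q 1)^2 := by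
    intro P Q
    rw [EuclideanSpace.dist_eq, Real.sq_sqrt (by positivity)]
    simp [Real.dist_eq, sq_abs]
  have ha2 := dsq B C
  have hb2 := dsq C A
  have hc2 := dsq A B
  rw [← ha] at ha2
  rw [← hb] at hb2
  rw [← hc] at hc2
  have o1 := congrArg (· ^ 2) hO.1
  have o2 := congrArg (· ^ 2) hO.2
  have e1 := congrArg (· ^ 2) hBe.1
  have e2 := congrArg (· ^ 2) hBe.2
  simp only [dsq] at o1 o2 e1 e2
  obtain ⟨hs, ht, hap, hbp, hcp⟩ := tri11 (A 0 - C 0) (A 1 - C 1) (B 0 - C 0) (B 1 - C 1) a b c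
    ha0 hb0 hc0 ha2 (by linarith) (by linarith) hdet
  obtain ⟨-, hr, -⟩ := tri11 (B 0 - A 0) (B 1 - A 1) (C 0 - A 0) (C 1 - A 1) b c a
    hb0 hc0 ha0 (by linarith) (by linarith) (by linarith) (by intro h; apply hdet; linarith)
  have bI : ∀ (u v w : ℝ), u + v + w ≠ 0 → ∀ i, bary A B C u v w i =
      C i + (u * (A i - C i) + v * (B i - C i))/(u+v+w) := by
    intro u v w h i
    simp [bary]; field_simp; ring
  have bI' : ∀ (u v w : ℝ), u + v + w ≠ 0 → ∀ i, bary A B C u v w i =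
      B i + (u * (A i - B i) + w * (C i - B i))/(u+v+w) := by
    intro u v w h i
    simp [bary]; field_simp; ring
  have n0 : a + b + c ≠ 0 := by positivity
  have n1 : -a + b + c ≠ 0 := by linarith
  have n2 : a + -b + c ≠ 0 := by linarith
  have n3 : a + b + -c ≠ 0 := by linarith
  have k1 := (key11 (A 0 - C 0) (A 1 - C 1) (B 0 - C 0) (B 1 - C 1) (O 0 - C 0) (O 1 - C 1)
    (Be 0 - C 0) (Be 1 - C 1) a b c
    ha0 hb0 hc0 ha2 (by linarith) (by linarith) hdet (by linarith) (by linarith) (by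
      rw [hI₁, hI₂] at e1
      rw [bI _ _ _ n1, bI _ _ _ n1, bI _ _ _ n2, bI _ _ _ n2] at e1
      rw [show b + c - a = -a + b + c by ring, show a + c - b = a + -b + c by ring]
      convert e1 using 1 <;> ring)).2.2.2.2.2
  have k2 := (key11 (A 0 - B 0) (A 1 - B 1) (C 0 - B 0) (C 1 - B 1) (O 0 - B 0) (O 1 - B 1)
    (Be 0 - B 0) (Be 1 - B 1) a c b
    ha0 hc0 hb0 (by linarith) (by linarith) (by linarith) (by intro h; apply hdet; linarith)
    (by linarith) (by linarith) (by
      rw [hI₁, hI₃] at e2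
      rw [bI' _ _ _ n1, bI' _ _ _ n1, bI' _ _ _ n3, bI' _ _ _ n3] at e2
      rw [show c + b - a = -a + b + c by ring, show a + b - c = a + b + -c by ring]
      convert e2 using 1 <;> ring)).2.2.2.2.2
  obtain ⟨D0, hD0⟩ : ∃ D, D = Be 0 - 2 * O 0 + I 0 := ⟨_, rfl⟩
  obtain ⟨D1, hD1⟩ : ∃ D, D = Be 1 - 2 * O 1 + I 1 := ⟨_, rfl⟩
  have f1 : D0 * (b*(B 0 - C 0) - a*(A 0 - C 0)) + D1 * (b*(B 1 - C 1) - a*(A 1 - C 1)) = 0 := by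
    rw [hD0, hD1, hI, bI _ _ _ n0, bI _ _ _ n0]
    linear_combination k1
  have f2 : D0 * (c*(C 0 - B 0) - a*(A 0 - B 0)) + D1 * (c*(C 1 - B 1) - a*(A 1 - B 1)) = 0 := by
    rw [hD0, hD1, hI, bI' _ _ _ n0, bI' _ _ _ n0]
    rw [show a + c + b = a + b + c by ring] at k2
    linear_combination k2
  have hE : a * (b+c-a) * ((A 0 - C 0)*(B 1 - C 1) - (A 1 - C 1)*(B 0 - C 0)) ≠ 0 :=
    mul_ne_zero (mul_pos hap hs).ne' hdet
  have g0 : D0 = 0 := by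
    apply (mul_eq_zero.1 _).resolve_left hE
    linear_combination (c*(C 1 - B 1) - a*(A 1 - B 1)) * f1 - (b*(B 1 - C 1) - a*(A 1 - C 1)) * f2
  have g1 : D1 = 0 := by
    apply (mul_eq_zero.1 _).resolve_left hE
    linear_combination (b*(B 0 - C 0) - a*(A 0 - C 0)) * f2 - (c*(C 0 - B 0) - a*(A 0 - B 0)) * f1
  ext i
  fin_cases i
  · simp; linarith
  · simp; linarith
end

section
/- Let A, B, C be a nondegenerate triangle in the Euclidean plane with side lengths a = dist B C, b = dist C A, c = dist A B, mittenpunkt Mi (barycentric combination of A, B, C with weights (a(b+c−a), b(c+a−b), c(a+b−c))), and excenters I₁, I₂, I₃ (barycentric weights (−a, b, c), (a, −b, c), (a, b, −c)). Then the symmedian (Lemoine) point of the excentral triangle I₁I₂I₃ — the barycentric combination of I₁, I₂, I₃ with weights (dist(I₂,I₃)², dist(I₃,I₁)², dist(I₁,I₂)²) — equals Mi. -/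
open EuclideanGeometry RealInnerProductSpace

theorem aux_tri (A B C : EuclideanSpace ℝ (Fin 2)) (h : ¬ Collinear ℝ {A, B, C}) :
    0 < dist A B + dist B C - dist A C := by
  have h1 := dist_triangle A B C
  rcases h1.lt_or_eq with h2 | h2
  · linarith
  · exact absurd (dist_add_dist_eq_iff.1 h2.symm).collinear h

theorem aux_dsq (P Q : EuclideanSpace ℝ (Fin 2)) :
    dist P Q ^ 2 = (P 0 - Q 0) ^ 2 + (P 1 - Q 1) ^ 2 := by
  rw [EuclideanSpace.dist_sq_eq, Fin.sum_univ_two, Real.dist_eq, Real.dist_eq, sq_abs, sq_abs]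

theorem aux_rot (P Q R : EuclideanSpace ℝ (Fin 2)) (u v w : ℝ) :
    bary P Q R u v w = bary Q R P v w u := by
  unfold bary
  rw [show v + w + u = u + v + w by ring]
  abel

theorem aux_dist_s12 (A B C : EuclideanSpace ℝ (Fin 2)) (a b c : ℝ)
    (ha : a ^ 2 = dist B C ^ 2) (hb : b ^ 2 = dist C A ^ 2) (hc : c ^ 2 = dist A B ^ 2)
    (hy : c + a - b ≠ 0) (hz : a + b - c ≠ 0) :
    dist (bary A B C a (-b) c) (bary A B C a b (-c)) ^ 2
      = 4 * a ^ 2 * b * c / ((c + a - b) * (a + b - c)) := by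
  rw [aux_dsq] at *
  have e : ∀ i, bary A B C a (-b) c i - bary A B C a b (-c) i =
      (2 * a / ((c + a - b) * (a + b - c))) * (c * (C i - A i) - b * (B i - A i)) := by
    intro i
    simp only [bary, PiLp.add_apply, PiLp.smul_apply, smul_eq_mul]
    rw [show a + -b + c = c + a - b by ring, show a + b + -c = a + b - c by ring]
    field_simp
    ring
  rw [e, e]
  have k : (c * (C 0 - A 0) - b * (B 0 - A 0)) ^ 2 + (c * (C 1 - A 1) - b * (B 1 - A 1)) ^ 2
      = b * c * ((c + a - b) * (a + b - c)) := by
    linear_combination (-c ^ 2 + b * c) * hb + (-b ^ 2 + b * c) * hc - b * c * ha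
  rw [mul_pow, mul_pow, ← mul_add, k]
  field_simp
  ring

theorem stmt12 (A B C : EuclideanSpace ℝ (Fin 2))
    (hABC : AffineIndependent ℝ ![A, B, C])
    (a b c : ℝ) (ha : a = dist B C) (hb : b = dist C A) (hc : c = dist A B)
    (I₁ I₂ I₃ Mi : EuclideanSpace ℝ (Fin 2))
    (hI₁ : I₁ = bary A B C (-a) b c)
    (hI₂ : I₂ = bary A B C a (-b) c)
    (hI₃ : I₃ = bary A B C a b (-c))
    (hMi : Mi = bary A B C (a * (b + c - a)) (b * (c + a - b)) (c * (a + b - c))) :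
    bary I₁ I₂ I₃ (dist I₂ I₃ ^ 2) (dist I₃ I₁ ^ 2) (dist I₁ I₂ ^ 2) = Mi := by
  have hn := affineIndependent_iff_not_collinear_set.1 hABC
  have hx : 0 < b + c - a := by
    have := aux_tri C A B (by convert hn using 2; ext; simp; tauto)
    rw [dist_comm C B] at this; subst ha hb hc; exact this
  have hy : 0 < c + a - b := by
    have := aux_tri A B C hn
    rw [dist_comm A C] at this; subst ha hb hc; exact this
  have hz : 0 < a + b - c := by
    have := aux_tri B C A (by convert hn using 2; ext; simp; tauto)
    rw [dist_comm B A] at this; subst ha hb hc; exact this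
  have pa : 0 < a := by linarith
  have pb : 0 < b := by linarith
  have pc : 0 < c := by linarith
  have d1 := aux_dist_s12 A B C a b c (by rw [ha]) (by rw [hb]) (by rw [hc]) hy.ne' hz.ne'
  have d2 := aux_dist_s12 B C A b c a (by rw [hb]) (by rw [hc]) (by rw [ha]) hz.ne' hx.ne'
  have d3 := aux_dist_s12 C A B c a b (by rw [hc]) (by rw [ha]) (by rw [hb]) hx.ne' hy.ne'
  rw [← aux_rot A B C a b (-c), ← aux_rot A B C (-a) b c, ← hI₃, ← hI₁] at d2
  rw [aux_rot C A B c (-a) b, aux_rot C A B c a (-b), ← hI₁, ← hI₂] at d3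
  rw [← hI₂, ← hI₃] at d1
  rw [d1, d2, d3, hMi, hI₁, hI₂, hI₃]
  clear d1 d2 d3 hMi hI₁ hI₂ hI₃ ha hb hc hn hABC
  ext i
  simp only [bary, PiLp.add_apply, PiLp.smul_apply, smul_eq_mul]
  rw [show a + -b + c = c + a - b by ring, show a + b + -c = a + b - c by ring,
    show -a + b + c = b + c - a by ring]
  have hS : 0 < a * (b + c - a) + b * (c + a - b) + c * (a + b - c) := by positivity
  obtain ⟨x, ex⟩ : ∃ x, x = b + c - a := ⟨_, rfl⟩
  obtain ⟨y, ey⟩ : ∃ y, y = c + a - b := ⟨_, rfl⟩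
  obtain ⟨z, ez⟩ : ∃ z, z = a + b - c := ⟨_, rfl⟩
  rw [← ex, ← ey, ← ez] at hS ⊢
  rw [← ex] at hx
  rw [← ey] at hy
  rw [← ez] at hz
  have e : 4 * a ^ 2 * b * c / (y * z) + 4 * b ^ 2 * c * a / (z * x) + 4 * c ^ 2 * a * b / (x * y)
      = 4 * a * b * c * (a * x + b * y + c * z) / (x * y * z) := by
    field_simp
  rw [e]
  obtain ⟨S, eS⟩ : ∃ S, S = a * x + b * y + c * z := ⟨_, rfl⟩
  rw [← eS] at hS ⊢
  field_simp
  rw [ex, ey, ez]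
  ring
end

section
/- Let A, B, C be a nondegenerate triangle in the Euclidean plane with circumcenter O and orthocenter H, and let M₁ = midpoint(B,C), M₂ = midpoint(C,A), M₃ = midpoint(A,B) be the vertices of the medial triangle. Then the circumcenter of the medial triangle M₁M₂M₃ equals midpoint(O, H), the nine-point center of triangle ABC. -/
open EuclideanGeometry RealInnerProductSpace

theorem nine_aux (A B C O : EuclideanSpace ℝ (Fin 2)) :
    dist (midpoint ℝ O (A + B + C - (2 : ℝ) • O)) (midpoint ℝ B C) = (1 / 2) * dist O A := by
  have h : midpoint ℝ O (A + B + C - (2 : ℝ) • O) - midpoint ℝ B C = (-(1 / 2) : ℝ) • (O - A) := by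
    simp only [midpoint_eq_smul_add, invOf_eq_inv]
    module
  rw [dist_eq_norm, h, norm_smul, dist_eq_norm]
  norm_num

theorem stmt14 (A B C O H : EuclideanSpace ℝ (Fin 2))
    (hABC : AffineIndependent ℝ ![A, B, C])
    (hO : dist O A = dist O B ∧ dist O A = dist O C)
    (hH : H = A + B + C - (2 : ℝ) • O)
    (M₁ M₂ M₃ : EuclideanSpace ℝ (Fin 2))
    (hM₁ : M₁ = midpoint ℝ B C) (hM₂ : M₂ = midpoint ℝ C A)
    (hM₃ : M₃ = midpoint ℝ A B) :
    dist (midpoint ℝ O H) M₁ = dist (midpoint ℝ O H) M₂ ∧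
      dist (midpoint ℝ O H) M₁ = dist (midpoint ℝ O H) M₃ := by
  subst hH hM₁ hM₂ hM₃
  have h1 := nine_aux A B C O
  have h2 := nine_aux B C A O
  have h3 := nine_aux C A B O
  rw [show B + C + A = A + B + C by abel] at h2
  rw [show C + A + B = A + B + C by abel] at h3
  rw [h1, h2, h3, ← hO.1, ← hO.2]
  exact ⟨rfl, rfl⟩
end

section
/- Let A, B, C be a nondegenerate triangle in the Euclidean plane with side lengths a = dist B C, b = dist C A, c = dist A B, incenter I (barycentric weights (a, b, c)), and circumcenter O. Let A₁, A₂, A₃ be the arc midpoints: A₁ is the point of the circumcircle of ABC distinct from A and collinear with A and I, and similarly A₂ for B and A₃ for C. Then the orthocenter of the mid-arc triangle A₁A₂A₃ equals the incenter I of triangle ABC. -/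
open EuclideanGeometry RealInnerProductSpace

abbrev EPl := EuclideanSpace ℝ (Fin 2)

lemma tri_lt (A B C : EPl) (h : ¬ Collinear ℝ ({A, B, C} : Set EPl)) :
    dist A C < dist A B + dist B C := by
  rcases (dist_triangle A B C).lt_or_eq with h1 | h1
  · exact h1
  · exact absurd (dist_add_dist_eq_iff.1 h1.symm).collinear h

lemma inner_sq (A B C : EPl) :
    2 * inner ℝ (B - A) (C - A) = dist A B ^ 2 + dist C A ^ 2 - dist B C ^ 2 := by
  rw [dist_comm A B, dist_eq_norm, dist_eq_norm, dist_eq_norm]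
  have h := norm_sub_sq_real (B - A) (C - A)
  rw [sub_sub_sub_cancel_right] at h
  linarith

lemma arc_mid (A B C O A₁ I : EPl) (a b c : ℝ) (ha : a = dist B C) (hb : b = dist C A)
    (hc : c = dist A B) (hb0 : 0 < b) (hc0 : 0 < c) (ha0 : 0 < a) (hlt : a < b + c)
    (hI : I = bary A B C a b c)
    (hO : dist O A = dist O B ∧ dist O A = dist O C)
    (hA₁ : dist O A₁ = dist O A ∧ A₁ ≠ A ∧ Collinear ℝ ({A, I, A₁} : Set EPl)) :
    A₁ = A + ((b + c) / ((a + b + c) * (b + c - a))) • (b • (B - A) + c • (C - A)) := by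
  obtain ⟨h1, hne, hcol⟩ := hA₁
  have hs : a + b + c ≠ 0 := by positivity
  have hd : b + c - a ≠ 0 := by linarith
  set w : EPl := b • (B - A) + c • (C - A) with hw
  have hIw : I = A + (1 / (a + b + c)) • w := by
    rw [hI, hw, bary]
    ext i
    simp only [PiLp.add_apply, PiLp.smul_apply, PiLp.sub_apply, smul_eq_mul]
    field_simp
    ring
  have e1 := inner_sq A B C
  have e2 := inner_sq A B O
  have e3 := inner_sq A C O
  rw [← ha, ← hb, ← hc] at e1
  rw [← hc, hO.1, dist_comm B O] at e2
  rw [dist_comm A C, ← hb, hO.2, dist_comm C O] at e3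
  have n1 : inner ℝ (B - A) (B - A) = c ^ 2 := by
    rw [real_inner_self_eq_norm_sq, ← dist_eq_norm, dist_comm, hc]
  have n2 : inner ℝ (C - A) (C - A) = b ^ 2 := by
    rw [real_inner_self_eq_norm_sq, ← dist_eq_norm, hb]
  have hww : inner ℝ w w = b * c * ((b + c - a) * (a + b + c)) := by
    simp only [hw, inner_add_left, inner_add_right, real_inner_smul_left, real_inner_smul_right,
      n1, n2, real_inner_comm (B - A) (C - A)]
    rw [real_inner_comm] at e1
    first
      | linear_combination b * c * e1
      | (rw [real_inner_comm] at e1; linear_combination b * c * e1)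
  have hwo : 2 * inner ℝ w (O - A) = b * c * (b + c) := by
    simp only [hw, inner_add_left, real_inner_smul_left]
    linear_combination b * e2 + c * e3
  have hwn : w ≠ 0 := by
    intro h
    rw [h, inner_zero_left] at hww
    have : 0 < b * c * ((b + c - a) * (a + b + c)) := by
      have : 0 < b + c - a := by linarith
      positivity
    linarith
  obtain ⟨v, hv⟩ := (collinear_iff_of_mem (p₀ := A) (by simp)).1 hcol
  obtain ⟨r, hr⟩ := hv I (by simp)
  obtain ⟨q, hq⟩ := hv A₁ (by simp)
  simp only [vadd_eq_add] at hr hq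
  have hrv : (1 / (a + b + c)) • w = r • v := by
    have := hIw.symm.trans hr
    rw [add_comm] at this
    exact add_right_cancel this
  have hr0 : r ≠ 0 := by
    rintro rfl
    rw [zero_smul, smul_eq_zero] at hrv
    rcases hrv with h | h
    · exact (one_div_ne_zero hs) h
    · exact hwn h
  obtain ⟨t, ht⟩ : ∃ t : ℝ, A₁ = A + t • w := by
    refine ⟨q / r / (a + b + c), ?_⟩
    have : v = (1 / r) • ((1 / (a + b + c)) • w) := by
      rw [hrv, smul_smul, one_div_mul_cancel hr0, one_smul]
    rw [hq, this, smul_smul, smul_smul, add_comm]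
    congr 2
    ring
  have ht0 : t ≠ 0 := by
    rintro rfl
    exact hne (by simpa using ht)
  have h2 : ‖(O - A) - t • w‖ ^ 2 = ‖O - A‖ ^ 2 := by
    rw [← dist_eq_norm O A, ← h1, dist_eq_norm, ht, sub_sub]
  rw [norm_sub_sq_real, norm_smul, mul_pow, ← real_inner_self_eq_norm_sq w, hww,
    real_inner_smul_right, real_inner_comm, Real.norm_eq_abs, sq_abs] at h2
  have h3 : t * (b * c) * (t * ((a + b + c) * (b + c - a)) - (b + c)) = 0 := by
    linear_combination h2 + t * hwo
  have h4 : t * ((a + b + c) * (b + c - a)) - (b + c) = 0 := by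
    rcases mul_eq_zero.1 h3 with h | h
    · exact absurd h (by positivity)
    · exact h
  rw [ht]
  congr 2
  rw [eq_div_iff (mul_ne_zero hs hd)]
  linarith

theorem stmt18 (A B C O : EuclideanSpace ℝ (Fin 2))
    (hABC : AffineIndependent ℝ ![A, B, C])
    (a b c : ℝ) (ha : a = dist B C) (hb : b = dist C A) (hc : c = dist A B)
    (I A₁ A₂ A₃ : EuclideanSpace ℝ (Fin 2))
    (hI : I = bary A B C a b c)
    (hO : dist O A = dist O B ∧ dist O A = dist O C)
    (hA₁ : dist O A₁ = dist O A ∧ A₁ ≠ A ∧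
      Collinear ℝ ({A, I, A₁} : Set (EuclideanSpace ℝ (Fin 2))))
    (hA₂ : dist O A₂ = dist O A ∧ A₂ ≠ B ∧
      Collinear ℝ ({B, I, A₂} : Set (EuclideanSpace ℝ (Fin 2))))
    (hA₃ : dist O A₃ = dist O A ∧ A₃ ≠ C ∧
      Collinear ℝ ({C, I, A₃} : Set (EuclideanSpace ℝ (Fin 2)))) :
    A₁ + A₂ + A₃ - (2 : ℝ) • O = I := by
  rw [affineIndependent_iff_not_collinear_set] at hABC
  have p1 : ({B, A, C} : Set EPl) = {A, B, C} := by ext; simp; tauto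
  have p2 : ({B, C, A} : Set EPl) = {A, B, C} := by ext; simp; tauto
  have p3 : ({C, A, B} : Set EPl) = {A, B, C} := by ext; simp; tauto
  have t1 := tri_lt A B C hABC
  have t2 := tri_lt B C A (p2 ▸ hABC)
  have t3 := tri_lt C A B (p3 ▸ hABC)
  have hab : 0 < c := hc ▸ dist_pos.2 (by
    rintro rfl
    exact hABC (by simpa using collinear_pair ℝ A C))
  have hbc : 0 < a := ha ▸ dist_pos.2 (by
    rintro rfl
    exact hABC (by simpa using collinear_pair ℝ A B))
  have hca : 0 < b := hb ▸ dist_pos.2 (by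
    rintro rfl
    exact hABC (by rw [← p1]; simpa using collinear_pair ℝ B C))
  rw [dist_comm A C, ← ha, ← hb, ← hc] at t1
  rw [dist_comm B A, ← ha, ← hb, ← hc] at t2
  rw [dist_comm C B, ← ha, ← hb, ← hc] at t3
  have hs : a + b + c ≠ 0 := by positivity
  have e1 := arc_mid A B C O A₁ I a b c ha hb hc hca hab hbc (by linarith) hI hO hA₁
  have e2 := arc_mid B C A O A₂ I b c a hb hc ha hab hbc hca (by linarith)
    (by rw [hI, bary, bary, show b + c + a = a + b + c by ring]; abel)
    ⟨hO.1.symm.trans hO.2, hO.1.symm⟩ (hO.1 ▸ hA₂)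
  have e3 := arc_mid C A B O A₃ I c a b hc ha hb hbc hca hab (by linarith)
    (by rw [hI, bary, bary, show c + a + b = a + b + c by ring]; abel)
    ⟨hO.2.symm, hO.2.symm.trans hO.1⟩ (hO.2 ▸ hA₃)
  have g1 := inner_sq A B C
  have g2 := inner_sq A B O
  have g3 := inner_sq A C O
  rw [← ha, ← hb, ← hc] at g1
  rw [← hc, hO.1, dist_comm B O] at g2
  rw [dist_comm A C, ← hb, hO.2, dist_comm C O] at g3
  have n1 : inner ℝ (B - A) (B - A) = c ^ 2 := by
    rw [real_inner_self_eq_norm_sq, ← dist_eq_norm, dist_comm, hc]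
  have n2 : inner ℝ (C - A) (C - A) = b ^ 2 := by
    rw [real_inner_self_eq_norm_sq, ← dist_eq_norm, hb]
  simp only [PiLp.inner_apply, Fin.sum_univ_two, PiLp.sub_apply, RCLike.inner_apply,
    conj_trivial] at g1 g2 g3 n1 n2
  have x1 : b + c - a ≠ 0 := by linarith
  have x2 : c + a - b ≠ 0 := by linarith
  have x3 : a + b - c ≠ 0 := by linarith
  -- coordinates relative to A
  obtain ⟨α, β, hα, hβ, hX⟩ : ∃ α β : ℝ,
      α * c ^ 2 + β * ((b ^ 2 + c ^ 2 - a ^ 2) / 2) = c ^ 2 ∧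
      α * ((b ^ 2 + c ^ 2 - a ^ 2) / 2) + β * b ^ 2 = b ^ 2 ∧
      ∀ i, (A₁ + A₂ + A₃ - (2 : ℝ) • O - I) i =
        α * (B i - A i) + β * (C i - A i) - 2 * (O i - A i) := by
    refine ⟨(b + c) / ((a + b + c) * (b + c - a)) * b
      + (1 - (c + a) / ((a + b + c) * (c + a - b)) * (c + a))
      + (a + b) / ((a + b + c) * (a + b - c)) * b - b / (a + b + c),
      (b + c) / ((a + b + c) * (b + c - a)) * c
      + (c + a) / ((a + b + c) * (c + a - b)) * c
      + (1 - (a + b) / ((a + b + c) * (a + b - c)) * (a + b)) - c / (a + b + c), ?_, ?_, ?_⟩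
    · field_simp
      ring
    · field_simp
      ring
    · intro i
      rw [e1, e2, e3, hI, bary, show b + c + a = a + b + c by ring,
        show c + a + b = a + b + c by ring]
      simp only [PiLp.add_apply, PiLp.smul_apply, PiLp.sub_apply, smul_eq_mul]
      field_simp
      ring
  set X := A₁ + A₂ + A₃ - (2 : ℝ) • O - I with hXd
  have k1 : X 0 * (B 0 - A 0) + X 1 * (B 1 - A 1) = 0 := by
    rw [hX, hX]
    linear_combination α * n1 + β / 2 * g1 + hα - g2
  have k2 : X 0 * (C 0 - A 0) + X 1 * (C 1 - A 1) = 0 := by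
    rw [hX, hX]
    linear_combination α / 2 * g1 + β * n2 + hβ - g3
  have hdet : (B 0 - A 0) * (C 1 - A 1) - (B 1 - A 1) * (C 0 - A 0) ≠ 0 := by
    intro h
    have y1 : 0 < b + c - a := by linarith
    have y2 : 0 < c + a - b := by linarith
    have y3 : 0 < a + b - c := by linarith
    have : 0 < (a + b + c) * (b + c - a) * (c + a - b) * (a + b - c) := by positivity
    have h5 : (2 * ((B 0 - A 0) * (C 1 - A 1) - (B 1 - A 1) * (C 0 - A 0))) ^ 2 =
        (a + b + c) * (b + c - a) * (c + a - b) * (a + b - c) := by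
      have h6 : (2 * ((B 0 - A 0) * (C 1 - A 1) - (B 1 - A 1) * (C 0 - A 0))) ^ 2 =
        4 * (c ^ 2 * b ^ 2) - (c ^ 2 + b ^ 2 - a ^ 2) ^ 2 := by
        rw [← g1, ← n1, ← n2]; ring
      rw [h6]; ring
    rw [h] at h5
    linarith
  have z0 : X 0 = 0 := by
    refine (mul_eq_zero.1 ?_).resolve_right hdet
    linear_combination (C 1 - A 1) * k1 - (B 1 - A 1) * k2
  have z1 : X 1 = 0 := by
    refine (mul_eq_zero.1 ?_).resolve_right hdet
    linear_combination (B 0 - A 0) * k2 - (C 0 - A 0) * k1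
  rw [← sub_eq_zero, ← hXd]
  ext i
  fin_cases i
  · simpa using z0
  · simpa using z1
end

section
/- Let A, B, C be a nondegenerate triangle in the Euclidean plane with side lengths a = dist B C, b = dist C A, c = dist A B, incenter I (barycentric weights (a, b, c)), circumcenter O, and mittenpunkt Mi (barycentric weights (a(b+c−a), b(c+a−b), c(a+b−c))). Let A₁, A₂, A₃ be the arc midpoints: A₁ is the point of the circumcircle of ABC distinct from A and collinear with A and I, and similarly A₂ for B and A₃ for C. Then the symmedian (Lemoine) point of the mid-arc triangle A₁A₂A₃ — the barycentric combination of A₁, A₂, A₃ with weights (dist(A₂,A₃)², dist(A₃,A₁)², dist(A₁,A₂)²) — equals midpoint(Mi, I). -/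
open EuclideanGeometry RealInnerProductSpace

lemma nsq (u v : EuclideanSpace ℝ (Fin 2)) (β γ : ℝ) :
    ‖β • u + γ • v‖ ^ 2 = β ^ 2 * ‖u‖ ^ 2 + γ ^ 2 * ‖v‖ ^ 2
      + β * γ * (‖u‖ ^ 2 + ‖v‖ ^ 2 - ‖u - v‖ ^ 2) := by
  simp only [EuclideanSpace.real_norm_sq_eq, Fin.sum_univ_two, PiLp.add_apply, PiLp.sub_apply,
    PiLp.smul_apply, smul_eq_mul]
  ring

lemma circ (O P w : EuclideanSpace ℝ (Fin 2)) (h : dist O (P + w) = dist O P) :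
    ‖w‖ ^ 2 = 2 * ⟪w, O - P⟫ := by
  have h2 : dist O (P + w) ^ 2 = dist O P ^ 2 := by rw [h]
  rw [dist_eq_norm, dist_eq_norm, ← sub_sub, norm_sub_sq_real, real_inner_comm] at h2
  linarith

lemma arc (P Q R O X : EuclideanSpace ℝ (Fin 2)) (p q r : ℝ)
    (hp : p = dist Q R) (hq : q = dist R P) (hr : r = dist P Q)
    (hp0 : 0 < p) (hq0 : 0 < q) (hr0 : 0 < r) (hlt : 0 < q + r - p)
    (hOQ : dist O P = dist O Q) (hOR : dist O P = dist O R)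
    (hX : dist O X = dist O P) (hne : X ≠ P)
    (hcol : Collinear ℝ ({P, bary P Q R p q r, X} : Set (EuclideanSpace ℝ (Fin 2)))) :
    X = P + ((q + r) / ((q + r - p) * (p + q + r))) • (q • (Q - P) + r • (R - P)) := by
  have hs : 0 < p + q + r := by positivity
  have hu : ‖Q - P‖ = r := by rw [hr, dist_comm, dist_eq_norm]
  have hv : ‖R - P‖ = q := by rw [hq, dist_eq_norm]
  have huv : ‖(Q - P) - (R - P)‖ = p := by rw [hp, dist_eq_norm]; congr 1; abel
  have hcu := circ O P (Q - P) (by rw [hOQ]; congr 1; abel)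
  have hcv := circ O P (R - P) (by rw [hOR]; congr 1; abel)
  have hI : bary P Q R p q r = P + (p + q + r)⁻¹ • (q • (Q - P) + r • (R - P)) := by
    unfold bary
    ext i
    simp only [PiLp.add_apply, PiLp.sub_apply, PiLp.smul_apply, smul_eq_mul]
    field_simp
    ring
  set w := q • (Q - P) + r • (R - P) with hw
  have hwn : ‖w‖ ^ 2 = q * r * ((q + r - p) * (p + q + r)) := by
    rw [hw, nsq, hu, hv, huv]; ring
  have hwpos : 0 < ‖w‖ ^ 2 := by rw [hwn]; positivity
  have hw0 : w ≠ 0 := by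
    intro h; rw [h] at hwpos; simp at hwpos
  have hwo : 2 * ⟪w, O - P⟫ = q * r * (q + r) := by
    rw [hw, inner_add_left, real_inner_smul_left, real_inner_smul_left]
    rw [hu] at hcu
    rw [hv] at hcv
    linear_combination (-q) * hcu - r * hcv
  obtain ⟨v, hvv⟩ := (collinear_iff_of_mem (p₀ := P) (by simp)).1 hcol
  obtain ⟨k, hk⟩ := hvv (bary P Q R p q r) (by simp)
  obtain ⟨l, hl⟩ := hvv X (by simp)
  rw [hI, vadd_eq_add, add_comm, add_left_inj] at hk
  rw [vadd_eq_add, add_comm] at hl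
  have hk0 : k ≠ 0 := by
    rintro rfl
    rw [zero_smul, smul_eq_zero] at hk
    rcases hk with h | h
    · exact (inv_ne_zero hs.ne') h
    · exact hw0 h
  obtain ⟨t, ht⟩ : ∃ t : ℝ, X = P + t • w := by
    refine ⟨l / k * (p + q + r)⁻¹, ?_⟩
    rw [mul_smul, hk, smul_smul, div_mul_cancel₀ _ hk0, hl]
  have ht0 : t ≠ 0 := by
    rintro rfl
    apply hne; simp [ht]
  have hc := circ O P (t • w) (by rw [← ht, hX])
  rw [norm_smul, mul_pow, hwn, real_inner_smul_left, Real.norm_eq_abs, sq_abs] at hc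
  have h1 : t * ((q + r - p) * (p + q + r)) = q + r := by
    have h2 : (t * (q * r)) * (t * ((q + r - p) * (p + q + r))) = (t * (q * r)) * (q + r) := by
      linear_combination hc + t * hwo
    exact mul_left_cancel₀ (by positivity) h2
  rw [ht, ← eq_div_of_mul_eq (by positivity) h1]

lemma tri (P Q R : EuclideanSpace ℝ (Fin 2))
    (h : ¬ Collinear ℝ ({P, Q, R} : Set (EuclideanSpace ℝ (Fin 2)))) :
    0 < dist P Q + dist Q R - dist P R := by
  rcases (dist_triangle P Q R).lt_or_eq with h1 | h1
  · linarith
  · exact absurd (dist_add_dist_eq_iff.1 h1.symm).collinear h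

lemma d23 (P Q R X Y : EuclideanSpace ℝ (Fin 2)) (p q r : ℝ)
    (hp : p = dist Q R) (hq : q = dist R P) (hr : r = dist P Q)
    (hp0 : 0 < p) (hq0 : 0 < q) (hr0 : 0 < r) (h1 : 0 < r + p - q) (h2 : 0 < p + q - r)
    (hX : X = Q + ((r + p) / ((r + p - q) * (p + q + r))) • (r • (R - Q) + p • (P - Q)))
    (hY : Y = R + ((p + q) / ((p + q - r) * (p + q + r))) • (p • (P - R) + q • (Q - R))) :
    dist X Y ^ 2 = p ^ 2 * q * r / ((r + p - q) * (p + q - r)) := by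
  have hs : 0 < p + q + r := by positivity
  have hu : ‖Q - P‖ = r := by rw [hr, dist_comm, dist_eq_norm]
  have hv : ‖R - P‖ = q := by rw [hq, dist_eq_norm]
  have huv : ‖(Q - P) - (R - P)‖ = p := by rw [hp, dist_eq_norm]; congr 1; abel
  have hd : X - Y = (-q * (q / ((r + p - q) * (p + q + r)))
        - (p + q) * (q / ((p + q - r) * (p + q + r)))) • (Q - P)
      + ((r + p) * (r / ((r + p - q) * (p + q + r)))
        + r * (r / ((p + q - r) * (p + q + r)))) • (R - P) := by
    rw [hX, hY]
    ext i
    simp only [PiLp.add_apply, PiLp.sub_apply, PiLp.smul_apply, smul_eq_mul]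
    field_simp
    ring
  rw [dist_eq_norm, hd, nsq, hu, hv, huv]
  field_simp
  ring

theorem stmt19 (A B C O : EuclideanSpace ℝ (Fin 2))
    (hABC : AffineIndependent ℝ ![A, B, C])
    (a b c : ℝ) (ha : a = dist B C) (hb : b = dist C A) (hc : c = dist A B)
    (I Mi A₁ A₂ A₃ : EuclideanSpace ℝ (Fin 2))
    (hI : I = bary A B C a b c)
    (hO : dist O A = dist O B ∧ dist O A = dist O C)
    (hMi : Mi = bary A B C (a * (b + c - a)) (b * (c + a - b)) (c * (a + b - c)))
    (hA₁ : dist O A₁ = dist O A ∧ A₁ ≠ A ∧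
      Collinear ℝ ({A, I, A₁} : Set (EuclideanSpace ℝ (Fin 2))))
    (hA₂ : dist O A₂ = dist O A ∧ A₂ ≠ B ∧
      Collinear ℝ ({B, I, A₂} : Set (EuclideanSpace ℝ (Fin 2))))
    (hA₃ : dist O A₃ = dist O A ∧ A₃ ≠ C ∧
      Collinear ℝ ({C, I, A₃} : Set (EuclideanSpace ℝ (Fin 2)))) :
    bary A₁ A₂ A₃ (dist A₂ A₃ ^ 2) (dist A₃ A₁ ^ 2) (dist A₁ A₂ ^ 2) =
      midpoint ℝ Mi I := by
  have hn := affineIndependent_iff_not_collinear_set.1 hABC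
  have hx : 0 < b + c - a := by
    have := tri B A C (by rwa [Set.insert_comm])
    rw [ha, hb, hc, dist_comm C A, dist_comm A B]; linarith
  have hy : 0 < c + a - b := by
    have := tri A B C hn
    rw [ha, hb, hc, dist_comm C A]; linarith
  have hz : 0 < a + b - c := by
    have := tri A C B (by rwa [Set.pair_comm])
    rw [ha, hb, hc, dist_comm C A, dist_comm B C]; linarith
  have ha0 : 0 < a := by linarith
  have hb0 : 0 < b := by linarith
  have hc0 : 0 < c := by linarith
  have hs : 0 < a + b + c := by positivity
  have e2 : bary A B C a b c = bary B C A b c a := by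
    unfold bary
    rw [show b + c + a = a + b + c by ring]; abel
  have e3 : bary A B C a b c = bary C A B c a b := by
    unfold bary
    rw [show c + a + b = a + b + c by ring]; abel
  obtain ⟨hAB, hAC⟩ := hO
  have r1 := arc A B C O A₁ a b c ha hb hc ha0 hb0 hc0 hx hAB hAC hA₁.1 hA₁.2.1
    (hI ▸ hA₁.2.2)
  have r2 := arc B C A O A₂ b c a hb hc ha hb0 hc0 ha0 hy (hAB ▸ hAC) hAB.symm
    (hA₂.1.trans hAB) hA₂.2.1 (e2 ▸ hI ▸ hA₂.2.2)
  have r3 := arc C A B O A₃ c a b hc ha hb hc0 ha0 hb0 hz hAC.symm (hAC.symm.trans hAB)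
    (hA₃.1.trans hAC) hA₃.2.1 (e3 ▸ hI ▸ hA₃.2.2)
  have s2 : b + c + a = a + b + c := by ring
  have s3 : c + a + b = a + b + c := by ring
  have f1 := d23 A B C A₂ A₃ a b c ha hb hc ha0 hb0 hc0 hy hz
    (by rw [← s2]; exact r2) (by rw [← s3]; exact r3)
  have f2 := d23 B C A A₃ A₁ b c a hb hc ha hb0 hc0 ha0 hz hx
    (by rw [s2, ← s3]; exact r3) (by rw [s2]; exact r1)
  have f3 := d23 C A B A₁ A₂ c a b hc ha hb hc0 ha0 hb0 hx hy
    (by rw [s3]; exact r1) (by rw [s3, ← s2]; exact r2)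
  rw [s2] at r2
  rw [s3] at r3
  have hD : 0 < a * (b + c - a) + b * (c + a - b) + c * (a + b - c) := by positivity
  have hK : 0 < a * b * c / ((b + c - a) * (c + a - b) * (a + b - c)) := by positivity
  have key : bary A₁ A₂ A₃ (dist A₂ A₃ ^ 2) (dist A₃ A₁ ^ 2) (dist A₁ A₂ ^ 2) =
      bary A₁ A₂ A₃ (a * (b + c - a)) (b * (c + a - b)) (c * (a + b - c)) := by
    have g1 : dist A₂ A₃ ^ 2 = a * b * c / ((b + c - a) * (c + a - b) * (a + b - c))
        * (a * (b + c - a)) := by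
      rw [f1]; field_simp
    have g2 : dist A₃ A₁ ^ 2 = a * b * c / ((b + c - a) * (c + a - b) * (a + b - c))
        * (b * (c + a - b)) := by
      rw [f2]; field_simp
    have g3 : dist A₁ A₂ ^ 2 = a * b * c / ((b + c - a) * (c + a - b) * (a + b - c))
        * (c * (a + b - c)) := by
      rw [f3]; field_simp
    rw [g1, g2, g3]
    unfold bary
    rw [← mul_add, ← mul_add, mul_div_mul_left _ _ hK.ne', mul_div_mul_left _ _ hK.ne',
      mul_div_mul_left _ _ hK.ne']
  rw [key, hMi, hI, r1, r2, r3, midpoint_eq_smul_add]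
  unfold bary
  ext i
  simp only [PiLp.add_apply, PiLp.sub_apply, PiLp.smul_apply, smul_eq_mul, invOf_eq_inv]
  generalize hDD : a * (b + c - a) + b * (c + a - b) + c * (a + b - c) = D at *
  field_simp
  rw [← hDD]
  ring
end
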